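/- arXiv:2411.07804 — 2 statements merged into one kernel-verified Lean document; each statement's English description precedes it below -/
import Mathlib

section
/- Let (ℬ, 𝒜, i, e, l) be a cleft extension of abelian categories such that l is exact and e preserves projective objects. If the endofunctor F satisfies Fⁿ = 0 for a positive integer n, and Proj 𝒜 = add(P) for some projective object P of 𝒜, then IT(ℬ) ≤ IT(𝒜) ≤ n(IT(ℬ) + 1) − 1. -/
open CategoryTheory Limits

attribute [local instance] CategoryTheory.Limits.HasFiniteBiproducts.of_hasFiniteProducts

noncomputable section

universe v u v' u'

/-- The `n`-th power of an endofunctor. -/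
def fpow {C : Type u} [Category.{v} C] (G : C ⥤ C) : ℕ → (C ⥤ C)
  | 0 => 𝟭 C
  | n + 1 => fpow G n ⋙ G

/-- `K` is a syzygy of `X`:  there is a short exact sequence `0 → K → P → X → 0`
with `P` projective. -/
def IsSyzygy {C : Type u} [Category.{v} C] [Abelian C] (K X : C) : Prop :=
  ∃ (P : C) (ι : K ⟶ P) (π : P ⟶ X) (w : ι ≫ π = 0),
    Projective P ∧ (ShortComplex.mk ι π w).ShortExact

/-- `K` is an `n`-th syzygy of `X` (a `0`-th syzygy of `X` is `X` itself). -/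
def IsNthSyzygy {C : Type u} [Category.{v} C] [Abelian C] : ℕ → C → C → Prop
  | 0, K, X => K = X
  | n + 1, K, X => ∃ Y : C, IsNthSyzygy n Y X ∧ IsSyzygy K Y

/-- `0 → X N → ⋯ → X 0 → 0` is exact. -/
def IsExactSeq {C : Type u} [Category.{v} C] [Abelian C] (N : ℕ) (X : ℕ → C)
    (d : ∀ n : ℕ, X (n + 1) ⟶ X n) : Prop :=
  Mono (d (N - 1)) ∧ Epi (d 0) ∧
    ∀ i : ℕ, i + 2 ≤ N →
      ∃ w : d (i + 1) ≫ d i = 0, (ShortComplex.mk (d (i + 1)) (d i) w).Exact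

/-- `X` belongs to `add U`: `X` is a direct summand of a finite direct sum of copies of `U`. -/
def InAdd {C : Type u} [Category.{v} C] [Abelian C] (U X : C) : Prop :=
  ∃ (n : ℕ) (s : X ⟶ ⨁ (fun _ : Fin n => U)) (p : (⨁ (fun _ : Fin n => U)) ⟶ X),
    s ≫ p = 𝟙 X

/-- `C` is an `(m, n)`-Igusa–Todorov category:  there is an object `U` such that every object
`A` admits an exact sequence `0 → U_m → ⋯ → U₁ → U₀ → Ωⁿ(A) → 0` with all `U_i ∈ add U`,
for some `n`-th syzygy `Ωⁿ(A)` of `A`. -/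
def IsITCategory (C : Type u) [Category.{v} C] [Abelian C] (m n : ℕ) : Prop :=
  ∃ U : C, ∀ A : C, ∃ (ΩA : C), IsNthSyzygy n ΩA A ∧
    ∃ (Us : ℕ → C) (_ : ∀ k : ℕ, k ≤ m → InAdd U (Us k))
      (d : ∀ k : ℕ, (fun j => if j = 0 then ΩA else Us (j - 1)) (k + 1) ⟶
        (fun j => if j = 0 then ΩA else Us (j - 1)) k),
      IsExactSeq (m + 1) (fun j => if j = 0 then ΩA else Us (j - 1)) d

/-- The Igusa–Todorov distance of an abelian category. -/
noncomputable def ITdist (C : Type u) [Category.{v} C] [Abelian C] : ℕ∞ :=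
  sInf {x : ℕ∞ | ∃ m n : ℕ, x = (m : ℕ∞) ∧ IsITCategory C m n}

/-!
Applying `e` to `0 → G A → l (e A) → A → 0` gives a sequence split by the unit of the adjunction,
so `e (G A)` depends only on `e A`. Hence `e (Gⁿ A) ≅ Fⁿ (e A) = 0`, and `Gⁿ = 0` because `e` is
faithful. Exact functors preserving projectives carry syzygies and `add U`-resolutions along:
`e`, which is essentially surjective, yields the lower bound, and `l` resolves the objects
`l (e A)` by `IT(ℬ) + 1` terms. Filtering `𝒜` by the vanishing of `Gʲ A`, each of the `n` steps
passes from `G A` and `l (e A)` to the cokernel `A` and adds `IT(ℬ) + 1` terms to the resolutions.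
-/

section AdditiveClosure

variable {C : Type u} [Category.{v} C] [Abelian C]
variable {D : Type u'} [Category.{v'} D] [Abelian D]

/-- The morphisms `X ⟶ Y` that factor through a finite direct sum of copies of `U`, written as
sums of composites `X ⟶ U ⟶ Y`. They form a two-sided ideal, and `X` lies in `add U` exactly
when this ideal contains `𝟙 X`. -/
def addIdeal (U X Y : C) : AddSubgroup (X ⟶ Y) where
  carrier := {f | ∃ (n : ℕ) (s : Fin n → (X ⟶ U)) (p : Fin n → (U ⟶ Y)), f = ∑ j, s j ≫ p j}
  zero_mem' := ⟨0, Fin.elim0, Fin.elim0, by simp⟩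
  add_mem' := by
    rintro f g ⟨n, s, p, rfl⟩ ⟨m, t, q, rfl⟩
    exact ⟨n + m, Fin.append s t, Fin.append p q, by simp [Fin.sum_univ_add]⟩
  neg_mem' := by
    rintro f ⟨n, s, p, rfl⟩
    exact ⟨n, fun j => -s j, p, by simp⟩

lemma comp_comp_mem_addIdeal {U X Y X' Y' : C} {f : X ⟶ Y} (hf : f ∈ addIdeal U X Y)
    (g : X' ⟶ X) (h : Y ⟶ Y') : g ≫ f ≫ h ∈ addIdeal U X' Y' := by
  obtain ⟨n, s, p, rfl⟩ := hf
  exact ⟨n, fun j => g ≫ s j, fun j => p j ≫ h, by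
    simp [Preadditive.sum_comp, Preadditive.comp_sum]⟩

lemma inAdd_iff_id_mem_addIdeal {U X : C} : InAdd U X ↔ 𝟙 X ∈ addIdeal U X X := by
  constructor
  · rintro ⟨n, s, p, hsp⟩
    refine ⟨n, fun j => s ≫ biproduct.π _ j, fun j => biproduct.ι (fun _ : Fin n => U) j ≫ p, ?_⟩
    calc 𝟙 X = s ≫ 𝟙 _ ≫ p := by rw [Category.id_comp, hsp]
      _ = s ≫ (∑ j, biproduct.π _ j ≫ biproduct.ι (fun _ : Fin n => U) j) ≫ p := by
        rw [biproduct.total]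
      _ = _ := by simp only [Preadditive.sum_comp, Preadditive.comp_sum, Category.assoc]
  · rintro ⟨n, s, p, hsp⟩
    exact ⟨n, biproduct.lift s, biproduct.desc p, by rw [biproduct.lift_desc, hsp]⟩

namespace InAdd

lemma comp_mem_addIdeal {U X Y Z : C} (hX : InAdd U X) (f : Y ⟶ X) (g : X ⟶ Z) :
    f ≫ g ∈ addIdeal U Y Z := by
  simpa using comp_comp_mem_addIdeal (inAdd_iff_id_mem_addIdeal.1 hX) f g

lemma refl (U : C) : InAdd U U :=
  inAdd_iff_id_mem_addIdeal.2 ⟨1, fun _ => 𝟙 U, fun _ => 𝟙 U, by simp⟩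

lemma trans {U V X : C} (hU : InAdd V U) (hX : InAdd U X) : InAdd V X := by
  obtain ⟨n, s, p, hsp⟩ := inAdd_iff_id_mem_addIdeal.1 hX
  rw [inAdd_iff_id_mem_addIdeal, hsp]
  exact sum_mem fun j _ => hU.comp_mem_addIdeal _ _

lemma of_retract {U X Y : C} (hX : InAdd U X) (r : Retract Y X) : InAdd U Y := by
  rw [inAdd_iff_id_mem_addIdeal, ← r.retract]
  exact hX.comp_mem_addIdeal _ _

lemma biprod {U X Y : C} (hX : InAdd U X) (hY : InAdd U Y) : InAdd U (X ⊞ Y) := by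
  rw [inAdd_iff_id_mem_addIdeal, ← biprod.total]
  exact add_mem (hX.comp_mem_addIdeal _ _) (hY.comp_mem_addIdeal _ _)

lemma biprod_left (U V : C) : InAdd (U ⊞ V) U :=
  (refl _).of_retract ⟨biprod.inl, biprod.fst, by simp⟩

lemma biprod_right (U V : C) : InAdd (U ⊞ V) V :=
  (refl _).of_retract ⟨biprod.inr, biprod.snd, by simp⟩

lemma of_isZero (U : C) {X : C} (hX : IsZero X) : InAdd U X := by
  rw [inAdd_iff_id_mem_addIdeal, hX.eq_of_src (𝟙 X) 0]
  exact zero_mem _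

lemma map (T : C ⥤ D) [T.Additive] {U X : C} (hX : InAdd U X) :
    InAdd (T.obj U) (T.obj X) := by
  obtain ⟨n, s, p, hsp⟩ := inAdd_iff_id_mem_addIdeal.1 hX
  refine inAdd_iff_id_mem_addIdeal.2 ⟨n, fun j => T.map (s j), fun j => T.map (p j), ?_⟩
  rw [← T.map_id, hsp, T.map_sum]
  simp only [T.map_comp]

end InAdd

end AdditiveClosure

section ShortExact

variable {C : Type u} [Category.{v} C] [Abelian C]
variable {D : Type u'} [Category.{v'} D] [Abelian D]

/-- There is a short exact sequence `0 → X → Y → Z → 0`. -/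
def HasShortExact (X Y Z : C) : Prop :=
  ∃ (f : X ⟶ Y) (g : Y ⟶ Z) (w : f ≫ g = 0), (ShortComplex.mk f g w).ShortExact

lemma hasShortExact_kernel {Y Z : C} (g : Y ⟶ Z) [Epi g] : HasShortExact (kernel g) Y Z :=
  ⟨kernel.ι g, g, kernel.condition g,
    { exact := ShortComplex.exact_of_f_is_kernel _ (kernelIsKernel g) }⟩

lemma hasShortExact_of_iso {X Y Z : C} (hX : IsZero X) (α : Y ≅ Z) : HasShortExact X Y Z :=
  ⟨0, α.hom, zero_comp,
    (ShortComplex.Splitting.ofIsZeroOfIsIso (ShortComplex.mk 0 α.hom zero_comp) hX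
      (inferInstanceAs (IsIso α.hom))).shortExact⟩

lemma HasShortExact.of_iso {X Y Z X' Y' Z' : C} (h : HasShortExact X Y Z) (α : X ≅ X')
    (β : Y ≅ Y') (γ : Z ≅ Z') : HasShortExact X' Y' Z' := by
  obtain ⟨f, g, w, h⟩ := h
  exact ⟨α.inv ≫ f ≫ β.hom, β.inv ≫ g ≫ γ.hom, by simp [reassoc_of% w],
    ShortComplex.shortExact_of_iso (ShortComplex.isoMk α β γ (by simp) (by simp)) h⟩

lemma HasShortExact.map (T : C ⥤ D) [T.Additive] [PreservesFiniteLimits T]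
    [PreservesFiniteColimits T] {X Y Z : C} (h : HasShortExact X Y Z) :
    HasShortExact (T.obj X) (T.obj Y) (T.obj Z) := by
  obtain ⟨f, g, w, h⟩ := h
  exact ⟨T.map f, T.map g, by rw [← T.map_comp, w, T.map_zero], h.map_of_exact T⟩

lemma HasShortExact.isZero_right {X Y Z : C} (h : HasShortExact X Y Z) (hY : IsZero Y) :
    IsZero Z := by
  obtain ⟨f, g, w, h⟩ := h
  have : Epi g := h.epi_g
  exact IsZero.of_epi g hY

lemma HasShortExact.nonempty_iso_of_isZero {X Y Z : C} (h : HasShortExact X Y Z)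
    (hX : IsZero X) : Nonempty (Y ≅ Z) := by
  obtain ⟨f, g, w, h⟩ := h
  have : IsIso g := h.isIso_g_iff.2 hX
  exact ⟨asIso g⟩

lemma HasShortExact.nonempty_iso_biprod {X Y Z : C} (h : HasShortExact X Y Z)
    (hZ : Projective Z) : Nonempty (Y ≅ X ⊞ Z) := by
  obtain ⟨f, g, w, h⟩ := h
  exact ⟨h.splittingOfProjective.isoBinaryBiproduct⟩

lemma HasShortExact.of_isPullback {X Y Z E T : C} {f : X ⟶ Y} {g : Y ⟶ Z} {w : f ≫ g = 0}
    (h : (ShortComplex.mk f g w).ShortExact) {p : E ⟶ Y} {q : E ⟶ T} {t : T ⟶ Z}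
    (sq : IsPullback p q g t) : HasShortExact X E T := by
  have : Epi g := h.epi_g
  have : Epi q := by
    rw [← sq.isoPullback_hom_snd]
    infer_instance
  have := isIso_kernel_map_of_isPullback sq.flip
  exact (hasShortExact_kernel q).of_iso
    (asIso (kernel.map q g p t sq.flip.w) ≪≫ (kernelIsKernel g).conePointUniqueUpToIso h.fIsKernel)
    (Iso.refl _) (Iso.refl _)

lemma HasShortExact.exists_pullback {X Y X' Y' Z : C} (h : HasShortExact X Y Z)
    (h' : HasShortExact X' Y' Z) : ∃ E : C, HasShortExact X E Y' ∧ HasShortExact X' E Y := by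
  obtain ⟨f, g, w, h⟩ := h
  obtain ⟨f', g', w', h'⟩ := h'
  have sq := IsPullback.of_hasPullback g g'
  exact ⟨pullback g g', .of_isPullback h sq, .of_isPullback h' sq.flip⟩

/-- The pullback of `Y → Z ← P` is an extension of `P` by `X`, which splits. -/
lemma HasShortExact.rotate {K P X Y Z : C} (h : HasShortExact X Y Z) (h' : HasShortExact K P Z)
    (hP : Projective P) : HasShortExact K (X ⊞ P) Y := by
  obtain ⟨E, hXE, hKE⟩ := h.exists_pullback h'
  obtain ⟨α⟩ := hXE.nonempty_iso_biprod hP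
  exact hKE.of_iso (Iso.refl _) α (Iso.refl _)

lemma HasShortExact.exists_kernel_comp {K V X Y Z : C} (h : HasShortExact K V Y)
    (h' : HasShortExact X Y Z) : ∃ W : C, HasShortExact W V Z ∧ HasShortExact K W X := by
  obtain ⟨k, p, w, h⟩ := h
  obtain ⟨f, g, w', h'⟩ := h'
  have : Epi p := h.epi_g
  have : Mono f := h'.mono_f
  have : Epi g := h'.epi_g
  have zero : pullback.fst p f ≫ p ≫ g = 0 := by
    rw [pullback.condition_assoc, w', comp_zero]
  refine ⟨pullback p f, ⟨pullback.fst p f, p ≫ g, zero, ?_⟩,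
    .of_isPullback h (IsPullback.of_hasPullback p f)⟩
  refine ShortComplex.ShortExact.mk' (ShortComplex.exact_of_f_is_kernel _ ?_)
    (inferInstanceAs (Mono (pullback.fst p f))) (inferInstanceAs (Epi (p ≫ g)))
  refine KernelFork.IsLimit.ofι' _ _ fun t ht => ?_
  have ht' : (t ≫ p) ≫ g = 0 := by rw [Category.assoc]; exact ht
  exact ⟨pullback.lift t (h'.exact.lift (t ≫ p) ht') (h'.exact.lift_f (t ≫ p) ht').symm,
    pullback.lift_fst _ _ _⟩

lemma HasShortExact.biprod_right {X Y Z : C} (h : HasShortExact X Y Z) (Q : C) :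
    HasShortExact X (Y ⊞ Q) (Z ⊞ Q) := by
  obtain ⟨f, g, w, h⟩ := h
  have sq : IsPullback biprod.fst (biprod.map g (𝟙 Q)) g biprod.fst :=
    .of_bot (by simp [IsPullback.of_has_biproduct]) (by simp)
      (IsPullback.of_has_biproduct Z Q)
  exact .of_isPullback h sq

end ShortExact

section Syzygy

variable {C : Type u} [Category.{v} C] [Abelian C]
variable {D : Type u'} [Category.{v'} D] [Abelian D]

lemma isSyzygy_iff {K X : C} :
    IsSyzygy K X ↔ ∃ P : C, Projective P ∧ HasShortExact K P X :=
  ⟨fun ⟨P, f, g, w, hP, h⟩ => ⟨P, hP, f, g, w, h⟩, fun ⟨P, hP, f, g, w, h⟩ => ⟨P, f, g, w, hP, h⟩⟩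

namespace IsSyzygy

lemma of_iso {K X X' : C} (h : IsSyzygy K X) (α : X ≅ X') : IsSyzygy K X' := by
  obtain ⟨P, hP, h⟩ := isSyzygy_iff.1 h
  exact isSyzygy_iff.2 ⟨P, hP, h.of_iso (Iso.refl _) (Iso.refl _) α⟩

lemma map (T : C ⥤ D) [T.Additive] [PreservesFiniteLimits T] [PreservesFiniteColimits T]
    (hT : ∀ Q : C, Projective Q → Projective (T.obj Q)) {K X : C} (h : IsSyzygy K X) :
    IsSyzygy (T.obj K) (T.obj X) := by
  obtain ⟨P, hP, h⟩ := isSyzygy_iff.1 h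
  exact isSyzygy_iff.2 ⟨T.obj P, hT P hP, h.map T⟩

lemma biprod_right {K X Q : C} (h : IsSyzygy K X) (hQ : Projective Q) : IsSyzygy K (X ⊞ Q) := by
  obtain ⟨P, hP, h⟩ := isSyzygy_iff.1 h
  exact isSyzygy_iff.2 ⟨P ⊞ Q, inferInstance, h.biprod_right Q⟩

end IsSyzygy

lemma exists_isSyzygy [EnoughProjectives C] (X : C) : ∃ K : C, IsSyzygy K X :=
  ⟨_, isSyzygy_iff.2 ⟨_, inferInstance, hasShortExact_kernel (Projective.π X)⟩⟩

lemma exists_isNthSyzygy [EnoughProjectives C] (n : ℕ) (X : C) : ∃ K : C, IsNthSyzygy n K X := by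
  induction n with
  | zero => exact ⟨X, rfl⟩
  | succ n ih =>
    obtain ⟨Y, hY⟩ := ih
    obtain ⟨K, hK⟩ := exists_isSyzygy Y
    exact ⟨K, Y, hY, hK⟩

namespace IsNthSyzygy

lemma of_iso {n : ℕ} {K X X' : C} (h : IsNthSyzygy n K X) (α : X ≅ X') :
    ∃ K' : C, IsNthSyzygy n K' X' ∧ Nonempty (K ≅ K') := by
  induction n generalizing K with
  | zero => exact ⟨X', rfl, ⟨eqToIso h ≪≫ α⟩⟩
  | succ n ih =>
    obtain ⟨Y, hY, hK⟩ := h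
    obtain ⟨Y', hY', ⟨β⟩⟩ := ih hY
    exact ⟨K, ⟨Y', hY', hK.of_iso β⟩, ⟨Iso.refl K⟩⟩

lemma comp {m n : ℕ} {K L X : C} (hK : IsNthSyzygy m K X) (hL : IsNthSyzygy n L K) :
    IsNthSyzygy (m + n) L X := by
  induction n generalizing L with
  | zero =>
    obtain rfl : L = K := hL
    exact hK
  | succ n ih =>
    obtain ⟨Y, hY, hL⟩ := hL
    exact ⟨Y, ih hY, hL⟩

lemma map (T : C ⥤ D) [T.Additive] [PreservesFiniteLimits T] [PreservesFiniteColimits T]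
    (hT : ∀ Q : C, Projective Q → Projective (T.obj Q)) {n : ℕ} {K X : C}
    (h : IsNthSyzygy n K X) : IsNthSyzygy n (T.obj K) (T.obj X) := by
  induction n generalizing K with
  | zero => exact congrArg T.obj h
  | succ n ih =>
    obtain ⟨Y, hY, hK⟩ := h
    exact ⟨T.obj Y, ih hY, hK.map T hT⟩

end IsNthSyzygy

lemma HasShortExact.exists_isNthSyzygy {n : ℕ} {X Y Z K L : C} (h : HasShortExact X Y Z)
    (hK : IsNthSyzygy n K X) (hL : IsNthSyzygy n L Y) :
    ∃ M Q : C, Projective Q ∧ IsNthSyzygy n M Z ∧ HasShortExact K (L ⊞ Q) M := by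
  induction n generalizing K L with
  | zero =>
    obtain rfl : K = X := hK
    obtain rfl : L = Y := hL
    exact ⟨Z, ⊥_ C, initialIsInitial.isZero.projective, rfl,
      h.of_iso (Iso.refl _) (isoBiprodZero initialIsInitial.isZero) (Iso.refl _)⟩
  | succ n ih =>
    obtain ⟨K₁, hK₁, hK⟩ := hK
    obtain ⟨L₁, hL₁, hL⟩ := hL
    obtain ⟨M₁, Q₁, hQ₁, hM₁, h₁⟩ := ih hK₁ hL₁
    obtain ⟨P, hP, hK⟩ := isSyzygy_iff.1 hK
    obtain ⟨R, hR, hL⟩ := isSyzygy_iff.1 (hL.biprod_right hQ₁)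
    obtain ⟨M, hM, hLM⟩ := hL.exists_kernel_comp h₁
    exact ⟨M, P, hP, ⟨M₁, hM₁, isSyzygy_iff.2 ⟨R, hR, hM⟩⟩, hLM.rotate hK hP⟩

lemma exists_shortComplexHom_of_projective (S : ShortComplex C) [Projective S.X₂]
    {S' : ShortComplex C} (hS' : S'.ShortExact) (f : S.X₃ ⟶ S'.X₃) :
    ∃ φ : S ⟶ S', φ.τ₃ = f := by
  have : Mono S'.f := hS'.mono_f
  have : Epi S'.g := hS'.epi_g
  let φ₂ : S.X₂ ⟶ S'.X₂ := Projective.factorThru (S.g ≫ f) S'.g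
  have comm₂ : φ₂ ≫ S'.g = S.g ≫ f := Projective.factorThru_comp _ _
  have zero : (S.f ≫ φ₂) ≫ S'.g = 0 := by rw [Category.assoc, comm₂, S.zero_assoc, zero_comp]
  exact ⟨{ τ₁ := hS'.exact.lift (S.f ≫ φ₂) zero, τ₂ := φ₂, τ₃ := f
           comm₁₂ := hS'.exact.lift_f _ _, comm₂₃ := comm₂ }, rfl⟩

lemma exists_fac_of_shortComplexHom {S S' : ShortComplex C} (hS' : S'.ShortExact) (φ : S ⟶ S')
    (hφ : φ.τ₃ = 0) : ∃ t : S.X₂ ⟶ S'.X₁, φ.τ₁ = S.f ≫ t := by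
  have : Mono S'.f := hS'.mono_f
  have zero : φ.τ₂ ≫ S'.g = 0 := by rw [φ.comm₂₃, hφ, comp_zero]
  refine ⟨hS'.exact.lift φ.τ₂ zero, ?_⟩
  rw [← cancel_mono S'.f, Category.assoc, hS'.exact.lift_f, φ.comm₁₂]

/-- Lift a decomposition `𝟙 S.X₃ = ∑ sⱼ ≫ pⱼ` through `S'.X₃` to endomorphisms of `S`; what it
misses on `S.X₁` factors through `S.X₂`. -/
lemma InAdd.of_shortExact {S S' : ShortComplex C} (hS : S.ShortExact) (hS' : S'.ShortExact)
    [Projective S.X₂] [Projective S'.X₂] {V : C} (h₃ : InAdd S'.X₃ S.X₃) (h₁ : InAdd V S'.X₁)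
    (h₂ : InAdd V S.X₂) : InAdd V S.X₁ := by
  obtain ⟨n, s, p, hsp⟩ := inAdd_iff_id_mem_addIdeal.1 h₃
  choose σ hσ using fun j => exists_shortComplexHom_of_projective S hS' (s j)
  choose ρ hρ using fun j => exists_shortComplexHom_of_projective S' hS (p j)
  have : (ShortComplex.π₁ : ShortComplex C ⥤ C).Additive := {}
  have : (ShortComplex.π₃ : ShortComplex C ⥤ C).Additive := {}
  have sum_τ₁ : (∑ j, σ j ≫ ρ j).τ₁ = ∑ j, (σ j).τ₁ ≫ (ρ j).τ₁ := ShortComplex.π₁.map_sum _ _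
  have sum_τ₃ : (∑ j, σ j ≫ ρ j).τ₃ = ∑ j, (σ j).τ₃ ≫ (ρ j).τ₃ := ShortComplex.π₃.map_sum _ _
  obtain ⟨t, ht⟩ := exists_fac_of_shortComplexHom hS (𝟙 S - ∑ j, σ j ≫ ρ j)
    (by simp only [ShortComplex.sub_τ₃, sum_τ₃, hσ, hρ, ← hsp, ShortComplex.id_τ₃, sub_self])
  have id_eq : 𝟙 S.X₁ = ∑ j, (σ j).τ₁ ≫ (ρ j).τ₁ + S.f ≫ t := by
    rwa [ShortComplex.sub_τ₁, sum_τ₁, ShortComplex.id_τ₁, sub_eq_iff_eq_add'] at ht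
  rw [inAdd_iff_id_mem_addIdeal, id_eq]
  exact add_mem (sum_mem fun j _ => h₁.comp_mem_addIdeal _ _) (h₂.comp_mem_addIdeal _ _)

lemma InAdd.of_isSyzygy {U V X K L : C} (hX : InAdd U X) (hK : IsSyzygy K X) (hL : IsSyzygy L U)
    (hVL : InAdd V L) (hV : ∀ Q : C, Projective Q → InAdd V Q) : InAdd V K := by
  obtain ⟨Q, _, _, _, hQ, hS⟩ := hK
  obtain ⟨R, _, _, _, hR, hS'⟩ := hL
  exact .of_shortExact hS hS' hX hVL (hV Q hQ)

end Syzygy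

section AddResolution

variable {C : Type u} [Category.{v} C] [Abelian C]
variable {D : Type u'} [Category.{v'} D] [Abelian D]

/-- `X` admits an exact sequence `0 → U_{m-1} → ⋯ → U₀ → X → 0` with all `U_i` in `add U`. The
number `m` counts the terms, so that `m = 0` means `X = 0` and an `(m, n)`-Igusa–Todorov category
is about resolutions with `m + 1` terms. -/
def HasAddResolution (U : C) : ℕ → C → Prop
  | 0, X => IsZero X
  | m + 1, X => ∃ W K : C, InAdd U W ∧ HasShortExact K W X ∧ HasAddResolution U m K

namespace HasAddResolution

lemma mono {U V X : C} {m : ℕ} (hV : InAdd V U) (h : HasAddResolution U m X) :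
    HasAddResolution V m X := by
  induction m generalizing X with
  | zero => exact h
  | succ m ih =>
    obtain ⟨W, K, hW, hs, hK⟩ := h
    exact ⟨W, K, hV.trans hW, hs, ih hK⟩

lemma of_iso {U X X' : C} {m : ℕ} (h : HasAddResolution U m X) (α : X ≅ X') :
    HasAddResolution U m X' := by
  cases m with
  | zero => exact IsZero.of_iso h α.symm
  | succ m =>
    obtain ⟨W, K, hW, hs, hK⟩ := h
    exact ⟨W, K, hW, hs.of_iso (Iso.refl _) (Iso.refl _) α, hK⟩

lemma of_isZero (U : C) {X : C} (hX : IsZero X) (m : ℕ) : HasAddResolution U m X := by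
  induction m with
  | zero => exact hX
  | succ m ih => exact ⟨X, X, .of_isZero U hX, hasShortExact_of_iso hX (Iso.refl X), ih⟩

lemma of_le {U X : C} {m n : ℕ} (h : HasAddResolution U m X) (hmn : m ≤ n) :
    HasAddResolution U n X := by
  induction m generalizing X n with
  | zero => exact of_isZero U h n
  | succ m ih =>
    obtain ⟨n, rfl⟩ := Nat.exists_eq_add_one_of_ne_zero (by lia : n ≠ 0)
    obtain ⟨W, K, hW, hs, hK⟩ := h
    exact ⟨W, K, hW, hs, ih hK (by lia)⟩

lemma biprod_right {U X Q : C} {m : ℕ} (h : HasAddResolution U (m + 1) X) (hQ : InAdd U Q) :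
    HasAddResolution U (m + 1) (X ⊞ Q) := by
  obtain ⟨W, K, hW, hs, hK⟩ := h
  exact ⟨W ⊞ Q, K, hW.biprod hQ, hs.biprod_right Q, hK⟩

lemma map (T : C ⥤ D) [T.Additive] [PreservesFiniteLimits T] [PreservesFiniteColimits T]
    {U X : C} {m : ℕ} (h : HasAddResolution U m X) : HasAddResolution (T.obj U) m (T.obj X) := by
  induction m generalizing X with
  | zero => exact T.map_isZero h
  | succ m ih =>
    obtain ⟨W, K, hW, hs, hK⟩ := h
    exact ⟨T.obj W, T.obj K, hW.map T, hs.map T, ih hK⟩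

lemma exists_isSyzygy [EnoughProjectives C] {U V L X : C} {m : ℕ} (hL : IsSyzygy L U)
    (hVL : InAdd V L) (hV : ∀ Q : C, Projective Q → InAdd V Q) (h : HasAddResolution U m X) :
    ∃ K : C, IsSyzygy K X ∧ HasAddResolution V m K := by
  induction m generalizing X with
  | zero =>
    exact ⟨X, isSyzygy_iff.2 ⟨X, IsZero.projective h, hasShortExact_of_iso h (Iso.refl X)⟩, h⟩
  | succ m ih =>
    obtain ⟨W, Y, hW, hs, hY⟩ := h
    obtain ⟨Y', hY', hY'V⟩ := ih hY
    obtain ⟨W', hW'⟩ := _root_.exists_isSyzygy W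
    have hVW' : InAdd V W' := hW.of_isSyzygy hW' hL hVL hV
    obtain ⟨Q, hQ, hQW⟩ := isSyzygy_iff.1 hW'
    obtain ⟨Q', hQ', hQ'Y⟩ := isSyzygy_iff.1 hY'
    obtain ⟨K, hK, hWK⟩ := hQW.exists_kernel_comp hs
    exact ⟨K, isSyzygy_iff.2 ⟨Q, hQ, hK⟩, W' ⊞ Q', Y', hVW'.biprod (hV Q' hQ'),
      hWK.rotate hQ'Y hQ', hY'V⟩

lemma exists_isNthSyzygy [EnoughProjectives C] {P : C} (hP : ∀ Q : C, Projective Q ↔ InAdd P Q)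
    {U L X : C} {m j : ℕ} (hL : IsNthSyzygy j L U) (h : HasAddResolution U m X) :
    ∃ K : C, IsNthSyzygy j K X ∧ HasAddResolution (L ⊞ P) m K := by
  induction j generalizing L with
  | zero =>
    obtain rfl : L = U := hL
    exact ⟨X, rfl, h.mono (.biprod_left _ _)⟩
  | succ j ih =>
    obtain ⟨Y, hY, hLY⟩ := hL
    obtain ⟨K, hK, hKY⟩ := ih hY
    obtain ⟨K', hK', hK'L⟩ :=
      hKY.exists_isSyzygy (hLY.biprod_right ((hP P).2 (.refl P))) (.biprod_left L P)
        fun Q hQ => (InAdd.biprod_right L P).trans ((hP Q).1 hQ)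
    exact ⟨K', ⟨K, hK, hK'⟩, hK'L⟩

end HasAddResolution

/-- Replace `0 → X → Y → Z → 0` by `0 → X' → K ⊞ Q → T → 0`, where `X'` is a syzygy of `X`, `K` is
the first syzygy in the resolution of `Y` and `T` is the kernel of `U₀ → Y → Z`: the resolution of
the middle term gets shorter. -/
lemma exists_hasAddResolution_right [EnoughProjectives C] {P : C}
    (hP : ∀ Q : C, Projective Q → InAdd P Q) (a b : ℕ) (U : C) :
    ∃ V : C, InAdd V U ∧ ∀ X Y Z : C, HasShortExact X Y Z → HasAddResolution U a Y →
      HasAddResolution U b X → HasAddResolution V (b + a) Z := by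
  induction a generalizing U with
  | zero => exact ⟨U, .refl U, fun X Y Z h hY _ => .of_isZero U (h.isZero_right hY) _⟩
  | succ a ih =>
    obtain ⟨L, hL⟩ := exists_isSyzygy U
    obtain ⟨V, hV, hVZ⟩ := ih ((U ⊞ L) ⊞ P)
    have hU : InAdd ((U ⊞ L) ⊞ P) U := (InAdd.biprod_left _ _).trans (.biprod_left _ _)
    have hL' : InAdd ((U ⊞ L) ⊞ P) L := (InAdd.biprod_left _ _).trans (.biprod_right _ _)
    have hQ' (Q : C) (hQ : Projective Q) : InAdd ((U ⊞ L) ⊞ P) Q :=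
      (InAdd.biprod_right _ _).trans (hP Q hQ)
    refine ⟨V, hV.trans hU, fun X Y Z h hY hX => ?_⟩
    obtain ⟨W, K, hW, hs, hK⟩ := hY
    obtain ⟨T, hT, hKT⟩ := hs.exists_kernel_comp h
    refine ⟨W, T, hV.trans (hU.trans hW), hT, ?_⟩
    cases a with
    | zero =>
      obtain ⟨α⟩ := hKT.nonempty_iso_of_isZero hK
      exact (hX.mono (hV.trans hU)).of_iso α.symm
    | succ a =>
      obtain ⟨X', hX', hX'U⟩ := hX.exists_isSyzygy hL hL' hQ'
      obtain ⟨Q, hQ, hX'⟩ := isSyzygy_iff.1 hX'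
      exact hVZ X' (K ⊞ Q) T (hKT.rotate hX' hQ) ((hK.mono hU).biprod_right (hQ' Q hQ)) hX'U

end AddResolution

section ExactSequence

variable {C : Type u} [Category.{v} C]

/-- The sequence of objects `X, Y 0, Y 1, …`: it turns the terms of a resolution of `X` into the
objects of an `IsExactSeq` that ends in `X`. -/
def consObj (X : C) (Y : ℕ → C) : ℕ → C
  | 0 => X
  | n + 1 => Y n

/-- The sequence of morphisms `⋯ ⟶ Y 1 ⟶ Y 0 ⟶ X` on `consObj X Y`, given by an augmentation
`f : Y 0 ⟶ X` and the differentials of `Y`. -/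
def consHom {X : C} {Y : ℕ → C} (f : Y 0 ⟶ X) (d : ∀ k, Y (k + 1) ⟶ Y k) :
    ∀ k, consObj X Y (k + 1) ⟶ consObj X Y k
  | 0 => f
  | k + 1 => d k

variable [Abelian C]

lemma exists_isExactSeq_iff {X : C} {Y Z : ℕ → C} (hZ : Z = consObj X Y) (N : ℕ) :
    (∃ d : ∀ k, Z (k + 1) ⟶ Z k, IsExactSeq N Z d) ↔
      ∃ (f : Y 0 ⟶ X) (d : ∀ k, Y (k + 1) ⟶ Y k),
        IsExactSeq N (consObj X Y) (consHom f d) := by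
  subst hZ
  refine ⟨fun ⟨d, h⟩ => ⟨d 0, fun k => d (k + 1), ?_⟩, fun ⟨f, d, h⟩ => ⟨consHom f d, h⟩⟩
  have d_eq : d = consHom (d 0) fun k => d (k + 1) := funext fun k => by cases k <;> rfl
  exact d_eq ▸ h

lemma isExactSeq_one_iff {Y : ℕ → C} {d : ∀ k, Y (k + 1) ⟶ Y k} :
    IsExactSeq 1 Y d ↔ IsIso (d 0) := by
  refine ⟨fun ⟨_, _, _⟩ => isIso_of_mono_of_epi (d 0), fun _ => ⟨?_, ?_, fun i hi => by lia⟩⟩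
  · exact inferInstanceAs (Mono (d 0))
  · infer_instance

lemma exact_comp_mono_iff {X Y K Z : C} {f : X ⟶ Y} {p : Y ⟶ K} {ι : K ⟶ Z} [Mono ι] {g : Y ⟶ Z}
    (hg : p ≫ ι = g) : (∃ w : f ≫ g = 0, (ShortComplex.mk f g w).Exact) ↔
      ∃ w : f ≫ p = 0, (ShortComplex.mk f p w).Exact := by
  have zero_iff : f ≫ g = 0 ↔ f ≫ p = 0 := by
    rw [← hg, ← Category.assoc, ← cancel_mono ι (g := f ≫ p), zero_comp]
  have exact_iff (w : f ≫ g = 0) (w' : f ≫ p = 0) :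
      (ShortComplex.mk f g w).Exact ↔ (ShortComplex.mk f p w').Exact := by
    let φ : ShortComplex.mk f p w' ⟶ ShortComplex.mk f g w :=
      { τ₁ := 𝟙 X, τ₂ := 𝟙 Y, τ₃ := ι }
    have : Epi φ.τ₁ := inferInstanceAs (Epi (𝟙 X))
    have : IsIso φ.τ₂ := inferInstanceAs (IsIso (𝟙 Y))
    have : Mono φ.τ₃ := inferInstanceAs (Mono ι)
    exact (ShortComplex.exact_iff_of_epi_of_isIso_of_mono φ).symm
  exact ⟨fun ⟨w, h⟩ => ⟨zero_iff.1 w, (exact_iff _ _).1 h⟩,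
    fun ⟨w, h⟩ => ⟨zero_iff.2 w, (exact_iff _ _).2 h⟩⟩

lemma exact_comp_iff_epi {X Y K Z : C} {ι : K ⟶ Y} {π : Y ⟶ Z} {w : ι ≫ π = 0}
    (h : (ShortComplex.mk ι π w).ShortExact) {p : X ⟶ K} {f : X ⟶ Y} (hf : p ≫ ι = f) :
    (∃ w' : f ≫ π = 0, (ShortComplex.mk f π w').Exact) ↔ Epi p := by
  subst hf
  have w' : (p ≫ ι) ≫ π = 0 := by rw [Category.assoc, w, comp_zero]
  have : Mono ι := h.mono_f
  let α : K ≅ kernel π := h.fIsKernel.conePointUniqueUpToIso (limit.isLimit _)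
  have hα : α.hom ≫ kernel.ι π = ι :=
    IsLimit.conePointUniqueUpToIso_hom_comp _ _ WalkingParallelPair.zero
  have lift_eq : kernel.lift π (p ≫ ι) w' = p ≫ α.hom := by
    rw [← cancel_mono (kernel.ι π), kernel.lift_ι, Category.assoc, hα]
  rw [exists_prop_of_true w', ShortComplex.exact_iff_epi_kernel_lift, lift_eq,
    epi_comp_iff_of_isIso]

lemma isExactSeq_splice_iff {X K : C} {Y : ℕ → C} {ι : K ⟶ Y 0} {π : Y 0 ⟶ X} {w : ι ≫ π = 0}
    (h : (ShortComplex.mk ι π w).ShortExact) {d : ∀ k, Y (k + 1) ⟶ Y k} {p : Y 1 ⟶ K}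
    (hp : p ≫ ι = d 0) (N : ℕ) :
    IsExactSeq (N + 2) (consObj X Y) (consHom π d) ↔
      IsExactSeq (N + 1) (consObj K fun k => Y (k + 1)) (consHom p fun k => d (k + 1)) := by
  have : Mono ι := h.mono_f
  have mono_iff : Mono (d 0) ↔ Mono p := by
    rw [← hp]
    exact ⟨fun _ => mono_of_mono p ι, fun _ => mono_comp p ι⟩
  constructor
  · rintro ⟨hmono, -, hex⟩
    refine ⟨?_, (exact_comp_iff_epi h hp).1 (hex 0 (by lia)), ?_⟩
    · cases N with
      | zero => exact mono_iff.1 hmono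
      | succ N => exact hmono
    · rintro (_ | i) hi
      · exact (exact_comp_mono_iff hp).1 (hex 1 (by lia))
      · exact hex (i + 2) (by lia)
  · rintro ⟨hmono, hepi, hex⟩
    refine ⟨?_, h.epi_g, ?_⟩
    · cases N with
      | zero => exact mono_iff.2 hmono
      | succ N => exact hmono
    · rintro (_ | _ | i) hi
      · exact (exact_comp_iff_epi h hp).2 hepi
      · exact (exact_comp_mono_iff hp).2 (hex 0 (by lia))
      · exact hex (i + 1) (by lia)

lemma hasAddResolution_succ_iff {U X : C} {m : ℕ} : HasAddResolution U (m + 1) X ↔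
    ∃ (Us : ℕ → C) (f : Us 0 ⟶ X) (d : ∀ k, Us (k + 1) ⟶ Us k), (∀ k ≤ m, InAdd U (Us k)) ∧
      IsExactSeq (m + 1) (consObj X Us) (consHom f d) := by
  induction m generalizing X with
  | zero =>
    constructor
    · rintro ⟨W, K, hW, hs, hK⟩
      obtain ⟨α⟩ := hs.nonempty_iso_of_isZero hK
      exact ⟨fun _ => W, α.hom, fun _ => 𝟙 W, fun _ _ => hW,
        isExactSeq_one_iff.2 (inferInstanceAs (IsIso α.hom))⟩
    · rintro ⟨Us, f, d, hUs, h⟩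
      have : IsIso f := isExactSeq_one_iff.1 h
      exact ⟨Us 0, ⊥_ C, hUs 0 le_rfl,
        hasShortExact_of_iso initialIsInitial.isZero (asIso f), initialIsInitial.isZero⟩
  | succ m ih =>
    constructor
    · rintro ⟨W, K, hW, ⟨ι, π, w, hs⟩, hK⟩
      obtain ⟨Us, f, d, hUs, h⟩ := ih.1 hK
      refine ⟨consObj W Us, π, consHom (f ≫ ι) d, ?_, (isExactSeq_splice_iff hs rfl m).2 h⟩
      rintro (_ | k) hk
      exacts [hW, hUs k (by lia)]
    · rintro ⟨Us, f, d, hUs, h⟩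
      obtain ⟨w, -⟩ : ∃ w : d 0 ≫ f = 0, (ShortComplex.mk (d 0) f w).Exact := h.2.2 0 (by lia)
      have : Epi f := h.2.1
      have hs : (ShortComplex.mk _ f (kernel.condition f)).ShortExact :=
        { exact := ShortComplex.exact_of_f_is_kernel _ (kernelIsKernel f) }
      exact ⟨Us 0, kernel f, hUs 0 (by lia), ⟨_, _, _, hs⟩, ih.2 ⟨_, _, _, fun k _ =>
        hUs (k + 1) (by lia), (isExactSeq_splice_iff hs (kernel.lift_ι f (d 0) w) m).1 h⟩⟩

lemma isITCategory_iff {m n : ℕ} : IsITCategory C m n ↔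
    ∃ U : C, ∀ A : C, ∃ K : C, IsNthSyzygy n K A ∧ HasAddResolution U (m + 1) K := by
  refine exists_congr fun U => forall_congr' fun A => exists_congr fun K =>
    and_congr_right fun _ => ?_
  rw [hasAddResolution_succ_iff]
  refine exists_congr fun Us => ?_
  have cons_eq : (fun j => if j = 0 then K else Us (j - 1)) = consObj K Us :=
    funext fun j => by cases j <;> rfl
  rw [exists_prop]
  refine (and_congr_right fun _ => exists_isExactSeq_iff cons_eq (m + 1)).trans ?_
  simp only [exists_and_left]

end ExactSequence

section ITBounded

variable {C : Type u} [Category.{v} C] [Abelian C]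
variable {D : Type u'} [Category.{v'} D] [Abelian D]

/-- Some `k`-th syzygy of `X` has a resolution by `m` terms in `add U`. -/
def HasSyzygyAddResolution (U : C) (m k : ℕ) (X : C) : Prop :=
  ∃ K : C, IsNthSyzygy k K X ∧ HasAddResolution U m K

namespace HasSyzygyAddResolution

variable {U V X : C} {m k : ℕ}

lemma mono (hV : InAdd V U) (h : HasSyzygyAddResolution U m k X) :
    HasSyzygyAddResolution V m k X := by
  obtain ⟨K, hK, hU⟩ := h
  exact ⟨K, hK, hU.mono hV⟩

lemma of_iso {X' : C} (h : HasSyzygyAddResolution U m k X) (α : X ≅ X') :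
    HasSyzygyAddResolution U m k X' := by
  obtain ⟨K, hK, hU⟩ := h
  obtain ⟨K', hK', ⟨β⟩⟩ := hK.of_iso α
  exact ⟨K', hK', hU.of_iso β⟩

lemma map (T : C ⥤ D) [T.Additive] [PreservesFiniteLimits T] [PreservesFiniteColimits T]
    (hT : ∀ Q : C, Projective Q → Projective (T.obj Q)) (h : HasSyzygyAddResolution U m k X) :
    HasSyzygyAddResolution (T.obj U) m k (T.obj X) := by
  obtain ⟨K, hK, hU⟩ := h
  exact ⟨T.obj K, hK.map T hT, hU.map T⟩

lemma add [EnoughProjectives C] {P : C} (hP : ∀ Q : C, Projective Q ↔ InAdd P Q) {L : C} {j : ℕ}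
    (hL : IsNthSyzygy j L U) (h : HasSyzygyAddResolution U m k X) :
    HasSyzygyAddResolution (L ⊞ P) m (k + j) X := by
  obtain ⟨K, hK, hU⟩ := h
  obtain ⟨M, hM, hLP⟩ := hU.exists_isNthSyzygy hP hL
  exact ⟨M, hK.comp hM, hLP⟩

end HasSyzygyAddResolution

/-- There are an object `U` and a number `k` such that every object of the class `𝒳` has a `k`-th
syzygy with a resolution by `m` terms in `add U`. For all objects and `m ≥ 1` this says that
`IT(C) ≤ m - 1`. -/
def IsITBounded (𝒳 : ObjectProperty C) (m : ℕ) : Prop :=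
  ∃ (U : C) (k : ℕ), ∀ X : C, 𝒳 X → HasSyzygyAddResolution U m k X

lemma ITdist_le_iff (m : ℕ) : ITdist C ≤ m ↔ IsITBounded (⊤ : ObjectProperty C) (m + 1) := by
  constructor
  · intro h
    have hne : {x : ℕ∞ | ∃ m n : ℕ, x = (m : ℕ∞) ∧ IsITCategory C m n}.Nonempty := by
      by_contra hempty
      rw [ITdist, Set.not_nonempty_iff_eq_empty.1 hempty, sInf_empty] at h
      exact ENat.natCast_ne_top m (top_le_iff.1 h)
    obtain ⟨m', k, hm', hIT⟩ := csInf_mem hne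
    have hle : m' ≤ m := by exact_mod_cast hm'.symm.trans_le h
    obtain ⟨U, hU⟩ := isITCategory_iff.1 hIT
    refine ⟨U, k, fun X _ => ?_⟩
    obtain ⟨K, hK, hKU⟩ := hU X
    exact ⟨K, hK, hKU.of_le (by lia)⟩
  · rintro ⟨U, k, h⟩
    exact sInf_le ⟨m, k, rfl, isITCategory_iff.2 ⟨U, fun X => h X trivial⟩⟩

namespace IsITBounded

lemma map (T : C ⥤ D) [T.Additive] [PreservesFiniteLimits T] [PreservesFiniteColimits T]
    (hT : ∀ Q : C, Projective Q → Projective (T.obj Q)) {𝒳 : ObjectProperty C} {m : ℕ}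
    (h : IsITBounded 𝒳 m) : IsITBounded (𝒳.map T) m := by
  obtain ⟨U, k, h⟩ := h
  refine ⟨T.obj U, k, ?_⟩
  rintro Y ⟨X, hX, ⟨α⟩⟩
  exact ((h X hX).map T hT).of_iso α

variable [EnoughProjectives C] {P : C} (hP : ∀ Q : C, Projective Q ↔ InAdd P Q)
include hP

lemma exists_common {𝒳 𝒴 : ObjectProperty C} {a b : ℕ} (hX : IsITBounded 𝒳 a)
    (hY : IsITBounded 𝒴 b) : ∃ (U : C) (k : ℕ), InAdd U P ∧
      (∀ X : C, 𝒳 X → HasSyzygyAddResolution U a k X) ∧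
      ∀ Y : C, 𝒴 Y → HasSyzygyAddResolution U b k Y := by
  obtain ⟨U₁, k₁, h₁⟩ := hX
  obtain ⟨U₂, k₂, h₂⟩ := hY
  obtain ⟨L₁, hL₁⟩ := exists_isNthSyzygy k₂ U₁
  obtain ⟨L₂, hL₂⟩ := exists_isNthSyzygy k₁ U₂
  refine ⟨(L₁ ⊞ P) ⊞ (L₂ ⊞ P), k₁ + k₂, (InAdd.biprod_left _ _).trans (.biprod_right _ _),
    fun X hX => ((h₁ X hX).add hP hL₁).mono (.biprod_left _ _), fun Y hY => ?_⟩
  rw [add_comm]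
  exact ((h₂ Y hY).add hP hL₂).mono (.biprod_right _ _)

lemma of_hasShortExact {𝒳 𝒴 𝒵 : ObjectProperty C} {a b : ℕ} (hX : IsITBounded 𝒳 b)
    (hY : IsITBounded 𝒴 (a + 1))
    (h : ∀ Z : C, 𝒵 Z → ∃ X Y : C, 𝒳 X ∧ 𝒴 Y ∧ HasShortExact X Y Z) :
    IsITBounded 𝒵 (b + (a + 1)) := by
  obtain ⟨U, k, hU, hX, hY⟩ := hX.exists_common hP hY
  obtain ⟨V, -, hV⟩ := exists_hasAddResolution_right (fun Q => (hP Q).1) (a + 1) b U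
  refine ⟨V, k, fun Z hZ => ?_⟩
  obtain ⟨X, Y, hX', hY', hs⟩ := h Z hZ
  obtain ⟨K, hK, hKU⟩ := hX X hX'
  obtain ⟨L, hL, hLU⟩ := hY Y hY'
  obtain ⟨M, Q, hQ, hM, hs'⟩ := hs.exists_isNthSyzygy hK hL
  exact ⟨M, hM, hV K (L ⊞ Q) M hs' (hLU.biprod_right (hU.trans ((hP Q).1 hQ))) hKU⟩

lemma isZero_iterate {𝒴 : ObjectProperty C} {m : ℕ} (hY : IsITBounded 𝒴 (m + 1)) {G : C → C}
    (hG : ∀ A : C, ∃ Y : C, 𝒴 Y ∧ HasShortExact (G A) Y A) (n : ℕ) :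
    IsITBounded (fun A => IsZero (G^[n] A)) (n * (m + 1)) := by
  induction n with
  | zero =>
    rw [zero_mul]
    exact ⟨⊥_ C, 0, fun A hA => ⟨A, rfl, hA⟩⟩
  | succ n ih =>
    rw [Nat.succ_mul]
    refine ih.of_hasShortExact hP hY fun A hA => ?_
    obtain ⟨Y, hY, hs⟩ := hG A
    exact ⟨G A, Y, hA, hY, hs⟩

end IsITBounded

lemma ITdist_le_of_essSurj (T : C ⥤ D) [T.Additive] [PreservesFiniteLimits T]
    [PreservesFiniteColimits T] [T.EssSurj]
    (hT : ∀ Q : C, Projective Q → Projective (T.obj Q)) : ITdist D ≤ ITdist C := by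
  cases hm : ITdist C with
  | top => exact le_top
  | coe m =>
    obtain ⟨U, k, h⟩ := ((ITdist_le_iff m).1 hm.le).map T hT
    exact (ITdist_le_iff m).2 ⟨U, k, fun Y _ => h Y ⟨_, trivial, ⟨T.objObjPreimageIso Y⟩⟩⟩

lemma ITdist_le_of_isZero_iterate [EnoughProjectives D] {P : D}
    (hP : ∀ Q : D, Projective Q ↔ InAdd P Q) (T : C ⥤ D) [T.Additive] [PreservesFiniteLimits T]
    [PreservesFiniteColimits T] (hT : ∀ Q : C, Projective Q → Projective (T.obj Q)) {G : D → D}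
    (hG : ∀ A : D, ∃ B : C, HasShortExact (G A) (T.obj B) A) {n : ℕ} (hn : 0 < n)
    (hGn : ∀ A : D, IsZero (G^[n] A)) : ITdist D ≤ n * (ITdist C + 1) - 1 := by
  cases hm : ITdist C with
  | top => simp [ENat.mul_top, hn.ne']
  | coe m =>
    have bounded : IsITBounded (⊤ : ObjectProperty C) (m + 1) := (ITdist_le_iff m).1 hm.le
    have iterate := (bounded.map T hT).isZero_iterate hP (G := G) (fun A => by
      obtain ⟨B, hB⟩ := hG A
      exact ⟨T.obj B, ObjectProperty.prop_map_obj _ T trivial, hB⟩) n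
    have cast_eq : (n : ℕ∞) * (m + 1) - 1 = (n * (m + 1) - 1 : ℕ) := by push_cast; rfl
    rw [cast_eq, ITdist_le_iff, Nat.sub_add_cancel (Nat.mul_pos hn m.succ_pos)]
    obtain ⟨U, k, h⟩ := iterate
    exact ⟨U, k, fun A _ => h A (hGn A)⟩

end ITBounded

section CleftExtension

variable {𝒜 : Type u} [Category.{v} 𝒜] {ℬ : Type u'} [Category.{v'} ℬ]
variable {e : 𝒜 ⥤ ℬ} {l : ℬ ⥤ 𝒜}

lemma nonempty_fpow_iso {F : ℬ ⥤ ℬ} {G : 𝒜 → 𝒜}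
    (h : ∀ A : 𝒜, Nonempty (F.obj (e.obj A) ≅ e.obj (G A))) (n : ℕ) (A : 𝒜) :
    Nonempty ((fpow F n).obj (e.obj A) ≅ e.obj (G^[n] A)) := by
  induction n with
  | zero => exact ⟨Iso.refl _⟩
  | succ n ih =>
    obtain ⟨α⟩ := ih
    obtain ⟨β⟩ := h (G^[n] A)
    rw [Function.iterate_succ_apply']
    exact ⟨F.mapIso α ≪≫ β⟩

lemma isZero_of_isZero_obj [HasZeroMorphisms 𝒜] [e.Faithful] {A : 𝒜} (h : IsZero (e.obj A)) :
    IsZero A :=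
  (IsZero.iff_id_eq_zero A).2 (e.map_injective (h.eq_of_src _ _))

variable [Abelian 𝒜] [Abelian ℬ] [e.Additive] [PreservesFiniteLimits e]
variable [PreservesFiniteColimits e] (adj : l ⊣ e)
include adj

lemma nonempty_iso_cokernel_unit {K A : 𝒜} {k : K ⟶ l.obj (e.obj A)}
    {w : k ≫ adj.counit.app A = 0} (h : (ShortComplex.mk k (adj.counit.app A) w).ShortExact) :
    Nonempty (e.obj K ≅ cokernel (adj.unit.app (e.obj A))) := by
  have h' := h.map_of_exact e
  let σ := ShortComplex.Splitting.ofExactOfSection _ h'.exact (adj.unit.app (e.obj A))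
    (adj.right_triangle_components A) h'.mono_f
  let τ : (ShortComplex.mk σ.s σ.r σ.s_r).Splitting :=
    { r := e.map (adj.counit.app A), s := e.map k, f_r := σ.s_g, s_g := σ.f_r
      id := by rw [add_comm]; exact σ.id }
  exact ⟨τ.gIsCokernel.coconePointUniqueUpToIso (colimit.isColimit _)⟩

lemma nonempty_inducedEndofunctor_iso {i : ℬ ⥤ 𝒜} (η : i ⋙ e ≅ 𝟭 ℬ) {G : 𝒜 ⥤ 𝒜} {κ : G ⟶ e ⋙ l}
    {hκ : ∀ A : 𝒜, κ.app A ≫ adj.counit.app A = 0}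
    (h : ∀ A : 𝒜, (ShortComplex.mk (κ.app A) (adj.counit.app A) (hκ A)).ShortExact) (A : 𝒜) :
    Nonempty ((i ⋙ G ⋙ e).obj (e.obj A) ≅ e.obj (G.obj A)) := by
  obtain ⟨α⟩ := nonempty_iso_cokernel_unit adj (h (i.obj (e.obj A)))
  obtain ⟨β⟩ := nonempty_iso_cokernel_unit adj (h A)
  let ε : e.obj (i.obj (e.obj A)) ≅ e.obj A := η.app (e.obj A)
  have unit_naturality := (adj.unit.naturality ε.hom).symm
  exact ⟨α ≪≫ cokernel.mapIso _ _ ε ((l ⋙ e).mapIso ε) unit_naturality ≪≫ β.symm⟩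

end CleftExtension

/-- Let `(ℬ, 𝒜, i, e, l)` be a cleft extension of abelian categories such
that `l` is exact and `e` preserves projectives.  If the induced endofunctor `F` satisfies
`Fⁿ = 0` for a positive integer `n`, and `Proj 𝒜 = add P` for some projective object `P` of
`𝒜`, then `IT(ℬ) ≤ IT(𝒜) ≤ n(IT(ℬ) + 1) − 1`. -/
theorem ITdist_cleftExtension
    {𝒜 : Type u} [Category.{v} 𝒜] [Abelian 𝒜] [EnoughProjectives 𝒜]
    {ℬ : Type u'} [Category.{v'} ℬ] [Abelian ℬ] [EnoughProjectives ℬ]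
    (i : ℬ ⥤ 𝒜) (e : 𝒜 ⥤ ℬ) (l : ℬ ⥤ 𝒜)
    [i.Additive] [e.Additive] [l.Additive]
    [e.Faithful] [PreservesFiniteLimits e] [PreservesFiniteColimits e]
    [PreservesFiniteLimits l] [PreservesFiniteColimits l]
    (adj : l ⊣ e) (η : i ⋙ e ≅ 𝟭 ℬ)
    (heproj : ∀ X : 𝒜, Projective X → Projective (e.obj X))
    (G : 𝒜 ⥤ 𝒜) (κ : G ⟶ e ⋙ l) (hκ : ∀ X : 𝒜, κ.app X ≫ adj.counit.app X = 0)
    (hker : ∀ X : 𝒜, IsLimit (KernelFork.ofι (κ.app X) (hκ X)))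
    (F : ℬ ⥤ ℬ) (hFG : F ≅ i ⋙ G ⋙ e)
    (n : ℕ) (hn : 0 < n) (hFn : ∀ B : ℬ, IsZero ((fpow F n).obj B))
    (P : 𝒜) (hP : Projective P) (hPadd : ∀ X : 𝒜, Projective X ↔ InAdd P X) :
    ITdist ℬ ≤ ITdist 𝒜 ∧ ITdist 𝒜 ≤ (n : ℕ∞) * (ITdist ℬ + 1) - 1 := by
  have shortExact (A : 𝒜) :
      (ShortComplex.mk (κ.app A) (adj.counit.app A) (hκ A)).ShortExact :=
    { exact := ShortComplex.exact_of_f_is_kernel _ (hker A)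
      mono_f := Fork.IsLimit.mono (hker A)
      epi_g := inferInstanceAs (Epi (adj.counit.app A)) }
  have isZero_iterate (A : 𝒜) : IsZero (G.obj^[n] A) := by
    obtain ⟨α⟩ := nonempty_fpow_iso (F := F) (fun A => by
      obtain ⟨β⟩ := nonempty_inducedEndofunctor_iso adj η shortExact A
      exact ⟨hFG.app _ ≪≫ β⟩) n A
    exact isZero_of_isZero_obj ((hFn (e.obj A)).of_iso α.symm)
  have : e.EssSurj := ⟨fun B => ⟨i.obj B, ⟨η.app B⟩⟩⟩
  exact ⟨ITdist_le_of_essSurj e heproj,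
    ITdist_le_of_isZero_iterate hPadd l adj.map_projective
      (fun A => ⟨e.obj A, _, _, _, shortExact A⟩) hn isZero_iterate⟩
end
end

section
/- Let (ℬ, 𝒜, i, e, r) be a cleft coextension of abelian categories with enough projective objects such that r is exact and the induced endofunctor F' satisfies F'ⁿ = 0 for a positive integer n. Then dim ℬ ≤ dim 𝒜 ≤ n(dim ℬ + 1) − 1. -/
open CategoryTheory Limits

attribute [local instance] CategoryTheory.Limits.HasFiniteBiproducts.of_hasFiniteProducts

noncomputable section

universe v u v' u'

/-- `add 𝒰`: the class of direct summands of finite direct sums of objects of `𝒰`. -/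
def addClosure {C : Type u} [Category.{v} C] [Abelian C] (S : Set C) : Set C :=
  {X | ∃ (n : ℕ) (g : Fin n → C), (∀ k, g k ∈ S) ∧
    ∃ (s : X ⟶ ⨁ g) (p : (⨁ g) ⟶ X), s ≫ p = 𝟙 X}

/-- The operation `𝒰₁ • 𝒰₂`. -/
def bulletOp {C : Type u} [Category.{v} C] [Abelian C] (S T : Set C) : Set C :=
  addClosure {X | ∃ (U V : C) (_ : U ∈ S) (_ : V ∈ T) (f : U ⟶ X) (g : X ⟶ V)
    (w : f ≫ g = 0), (ShortComplex.mk f g w).ShortExact}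

/-- `[T]_n`. -/
def bracket {C : Type u} [Category.{v} C] [Abelian C] (T : C) : ℕ → Set C
  | 0 => {X | IsZero X}
  | n + 1 => bulletOp (addClosure {T}) (bracket T n)

/-- The extension dimension of an abelian category:  the least `n` such that
`𝒞 = [T]_{n+1}` for some object `T` (or `∞` if there is no such `n`). -/
noncomputable def extDim (C : Type u) [Category.{v} C] [Abelian C] : ℕ∞ :=
  sInf {x : ℕ∞ | ∃ m : ℕ, x = (m : ℕ∞) ∧ ∃ T : C, ∀ X : C, X ∈ bracket T (m + 1)}

/-!
For every `A` the unit gives a short exact sequence `0 ⟶ A ⟶ r (e A) ⟶ G' A ⟶ 0`. Both `e (G' A)`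
and `F' (e A)` are the kernel of the counit at `e A`, so `F'ⁿ = 0` forces `G'ⁿ = 0`, `e` being
faithful. As `r` is exact, all the `r (e A)` lie in `[r T]_k` once `ℬ = [T]_k`; it remains to
descend from `G'ⁿ A = 0` to `A` along these sequences.

One step of the descent bounds the kernel `A` of an epimorphism `R ⟶ Q`. If `Q` has a projective
presentation `0 ⟶ K ⟶ P ⟶ Q ⟶ 0`, then `A ⊞ P` is an extension of `R` by `K`, so that `A` is as
complex as `K` and `R` together; by the horseshoe lemma the syzygies `K` of the objects of `[T]_b`
can be taken in `[Ω T]_b`. Hence `n` steps put every `A` in `[W]_{nk}` for a single `W`.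
-/

open scoped ZeroObject

section Extensions

variable {C : Type u} [Category.{v} C] [Abelian C]

/-- The splitting of the short complex `X₃ ⟶ X₂ ⟶ X₁` made of the section and the retraction of a
split short complex. -/
def reverseSplitting {S : ShortComplex C} (s : S.Splitting) :
    (ShortComplex.mk s.s s.r s.s_r).Splitting where
  r := S.g
  s := S.f
  id := (add_comm _ _).trans s.id

/-- `X` is an extension of `V` by `U`: there is a short exact sequence `0 ⟶ U ⟶ X ⟶ V ⟶ 0`. -/
def IsExtension (U X V : C) : Prop :=
  ∃ (f : U ⟶ X) (g : X ⟶ V) (w : f ≫ g = 0), (ShortComplex.mk f g w).ShortExact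

namespace IsExtension

lemma of_shortExact {S : ShortComplex C} (h : S.ShortExact) : IsExtension S.X₁ S.X₂ S.X₃ :=
  ⟨S.f, S.g, S.zero, h⟩

lemma of_exists_lift {U X V : C} (f : U ⟶ X) (g : X ⟶ V) [Mono f] [Epi g] (w : f ≫ g = 0)
    (h : ∀ ⦃A : C⦄ (x : A ⟶ X), x ≫ g = 0 → ∃ u : A ⟶ U, u ≫ f = x) : IsExtension U X V :=
  ⟨f, g, w, .mk' (ShortComplex.exact_of_f_is_kernel _
    (KernelFork.IsLimit.ofι' f w fun x hx ↦ ⟨_, (h x hx).choose_spec⟩)) inferInstance inferInstance⟩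

lemma of_epi {X V : C} (g : X ⟶ V) [Epi g] : IsExtension (kernel g) X V :=
  .of_exists_lift (kernel.ι g) g (kernel.condition g) fun _ x hx ↦ ⟨kernel.lift g x hx, by simp⟩

lemma of_isZero_left {X Z : C} (hZ : IsZero Z) : IsExtension Z X X :=
  have : Mono (0 : Z ⟶ X) := ⟨fun _ _ _ ↦ hZ.eq_of_tgt _ _⟩
  .of_exists_lift 0 (𝟙 X) (by simp) fun _ x hx ↦ ⟨0, by simpa using hx.symm⟩

lemma nonempty_iso_of_isZero_left {U X V : C} (h : IsExtension U X V) (hU : IsZero U) :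
    Nonempty (X ≅ V) := by
  obtain ⟨f, g, w, h⟩ := h
  have : IsIso g := h.isIso_g_iff.2 hU
  exact ⟨asIso g⟩

lemma op {U X V : C} (h : IsExtension U X V) :
    IsExtension (Opposite.op V) (Opposite.op X) (Opposite.op U) := by
  obtain ⟨f, g, w, h⟩ := h
  exact .of_shortExact h.op

lemma unop {U X V : Cᵒᵖ} (h : IsExtension U X V) : IsExtension V.unop X.unop U.unop := by
  obtain ⟨f, g, w, h⟩ := h
  exact .of_shortExact h.unop

lemma map {D : Type u'} [Category.{v'} D] [Abelian D] (F : C ⥤ D) [F.PreservesZeroMorphisms]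
    [PreservesFiniteLimits F] [PreservesFiniteColimits F] {U X V : C} (h : IsExtension U X V) :
    IsExtension (F.obj U) (F.obj X) (F.obj V) := by
  obtain ⟨f, g, w, h⟩ := h
  exact .of_shortExact (h.map_of_exact F)

lemma biprod {U X V U' X' V' : C} (h : IsExtension U X V) (h' : IsExtension U' X' V') :
    IsExtension (U ⊞ U') (X ⊞ X') (V ⊞ V') := by
  obtain ⟨f, g, w, h⟩ := h
  obtain ⟨f', g', w', h'⟩ := h'
  have := h.mono_f
  have := h'.mono_f
  have := h.epi_g
  have := h'.epi_g
  refine .of_exists_lift (biprod.map f f') (biprod.map g g') (by ext <;> simp [w, w'])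
    fun A x hx ↦ ?_
  obtain ⟨u, hu⟩ := h.exact.lift' (x ≫ biprod.fst) (by simpa using hx =≫ biprod.fst)
  obtain ⟨u', hu'⟩ := h'.exact.lift' (x ≫ biprod.snd) (by simpa using hx =≫ biprod.snd)
  dsimp at hu hu'
  exact ⟨biprod.lift u u', by ext <;> simp [hu, hu']⟩

lemma swap_of_projective {U X V : C} [Projective V] (h : IsExtension U X V) :
    IsExtension V X U := by
  obtain ⟨f, g, w, h⟩ := h
  have : Projective (ShortComplex.mk f g w).X₃ := ‹Projective V›
  exact .of_shortExact (reverseSplitting h.splittingOfProjective).shortExact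

lemma projective {U X V : C} [Projective U] [Projective V] (h : IsExtension U X V) :
    Projective X := by
  obtain ⟨f, g, w, h⟩ := h
  have : Projective (ShortComplex.mk f g w).X₃ := ‹Projective V›
  exact Projective.of_iso h.splittingOfProjective.isoBinaryBiproduct.symm
    (inferInstanceAs (Projective (U ⊞ V)))

end IsExtension

lemma isExtension_pullback {U X V Y : C} {f : U ⟶ X} {g : X ⟶ V} {w : f ≫ g = 0}
    (h : (ShortComplex.mk f g w).ShortExact) (z : Y ⟶ V) : IsExtension U (pullback g z) Y := by
  have := h.mono_f
  have := h.epi_g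
  let l : U ⟶ pullback g z := pullback.lift f 0 (by simp [w])
  have hfst : l ≫ pullback.fst g z = f := pullback.lift_fst _ _ _
  have hsnd : l ≫ pullback.snd g z = 0 := pullback.lift_snd _ _ _
  have : Mono l := mono_of_mono_fac hfst
  refine .of_exists_lift l (pullback.snd g z) hsnd fun A x hx ↦ ?_
  obtain ⟨u, hu⟩ := h.exact.lift' (x ≫ pullback.fst g z) (by
    simp [pullback.condition, reassoc_of% hx])
  dsimp at hu
  exact ⟨u, by ext <;> simp [hfst, hsnd, hu, hx]⟩

namespace IsExtension

lemma of_iso_middle {U X X' V : C} (h : IsExtension U X V) (a : X ≅ X') : IsExtension U X' V := by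
  obtain ⟨f, g, w, h⟩ := h
  let φ : ShortComplex.mk f g w ≅ ShortComplex.mk (f ≫ a.hom) (a.inv ≫ g) (by simp [w]) :=
    ShortComplex.isoMk (.refl _) a (.refl _)
  exact .of_shortExact (ShortComplex.shortExact_of_iso φ h)

lemma exists_pullback {U X V L Y : C} (h : IsExtension U X V) (h' : IsExtension L Y V) :
    ∃ E, IsExtension U E Y ∧ IsExtension L E X := by
  obtain ⟨f, g, w, h⟩ := h
  obtain ⟨l, z, w', h'⟩ := h'
  exact ⟨pullback g z, isExtension_pullback h z,
    (isExtension_pullback h' g).of_iso_middle (pullbackSymmetry z g)⟩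

lemma exists_kernel_comp {K X E L Y : C} (h : IsExtension K X E) (h' : IsExtension L E Y) :
    ∃ M, IsExtension K M L ∧ IsExtension M X Y := by
  obtain ⟨k, p, w, h⟩ := h
  obtain ⟨l, q, w', h'⟩ := h'
  have := h'.mono_f
  have := h.epi_g
  have := h'.epi_g
  refine ⟨pullback p l, isExtension_pullback h l, .of_exists_lift (pullback.fst p l) (p ≫ q)
    (by simp [pullback.condition_assoc, w']) fun A x hx ↦ ?_⟩
  obtain ⟨u, hu⟩ := h'.exact.lift' (x ≫ p) (by simpa using hx)
  exact ⟨pullback.lift x u hu.symm, pullback.lift_fst _ _ _⟩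

lemma exists_cokernel_comp {U Z V X Y : C} (h : IsExtension U Z V) (h' : IsExtension Z X Y) :
    ∃ E, IsExtension U X E ∧ IsExtension V E Y := by
  obtain ⟨M, hYV, hXU⟩ := h'.op.exists_kernel_comp h.op
  exact ⟨M.unop, hXU.unop, hYV.unop⟩

lemma exists_of_retract_right {U X V V' : C} (h : IsExtension U X V) (σ : Retract V V') :
    ∃ X', IsExtension U X' V' ∧ Nonempty (Retract X X') := by
  obtain ⟨f, g, w, h⟩ := h
  exact ⟨pullback g σ.r, isExtension_pullback h σ.r,
    ⟨pullback.lift (𝟙 X) (g ≫ σ.i) (by simp), pullback.fst g σ.r, pullback.lift_fst _ _ _⟩⟩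

lemma exists_of_retract_left {U X V U' : C} (h : IsExtension U X V) (ρ : Retract U U') :
    ∃ X', IsExtension U' X' V ∧ Nonempty (Retract X X') := by
  obtain ⟨X', hX', ⟨τ⟩⟩ := h.op.exists_of_retract_right ρ.op
  exact ⟨X'.unop, hX'.unop, ⟨⟨τ.r.unop, τ.i.unop, congrArg Quiver.Hom.unop τ.retract⟩⟩⟩

lemma exists_of_retract {U X V U' V' : C} (h : IsExtension U X V) (ρ : Retract U U')
    (σ : Retract V V') : ∃ X', IsExtension U' X' V' ∧ Nonempty (Retract X X') := by
  obtain ⟨X₁, h₁, ⟨τ₁⟩⟩ := h.exists_of_retract_left ρ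
  obtain ⟨X₂, h₂, ⟨τ₂⟩⟩ := h₁.exists_of_retract_right σ
  exact ⟨X₂, h₂, ⟨τ₁.trans τ₂⟩⟩

lemma horseshoe {U X V P Q K L : C} [Projective P] [Projective Q] (h : IsExtension U X V)
    (hU : IsExtension K P U) (hV : IsExtension L Q V) :
    ∃ M R, Projective R ∧ IsExtension K M L ∧ IsExtension M R X := by
  obtain ⟨E, hUEQ, hLEX⟩ := h.exists_pullback hV
  obtain ⟨R, hQRP, hKRE⟩ := hUEQ.swap_of_projective.exists_pullback hU
  obtain ⟨M, hKML, hMRX⟩ := hKRE.exists_kernel_comp hLEX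
  exact ⟨M, R, hQRP.projective, hKML, hMRX⟩

-- Over the pullback `E` of `R ⟶ Q ⟶ Z` and `P ⟶ Z` the sequence `0 ⟶ A ⟶ E` splits, because the
-- map `P ⟶ Z ⟶ Q` lifts to `R`.
lemma exists_retract_of_projective {A R Q Z K P : C} [Projective P] (h : IsExtension A R Q)
    (ρ : Retract Q Z) (hZ : IsExtension K P Z) :
    ∃ E, IsExtension K E R ∧ Nonempty (Retract A E) := by
  obtain ⟨f, g, w, h⟩ := h
  obtain ⟨k, π, w', hZ⟩ := hZ
  have := h.mono_f
  have := h.epi_g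
  let t : P ⟶ R := Projective.factorThru (π ≫ ρ.r) g
  have ht : t ≫ g = π ≫ ρ.r := Projective.factorThru_comp _ g
  refine ⟨pullback π (g ≫ ρ.i), isExtension_pullback hZ _, ?_⟩
  obtain ⟨s, hs⟩ := h.exact.lift' (pullback.snd π (g ≫ ρ.i) - pullback.fst π (g ≫ ρ.i) ≫ t) (by
    simp [ht, pullback.condition_assoc])
  dsimp at hs
  let l : A ⟶ pullback π (g ≫ ρ.i) := pullback.lift 0 f (by simp [reassoc_of% w])
  have hfst : l ≫ pullback.fst π (g ≫ ρ.i) = 0 := pullback.lift_fst _ _ _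
  have hsnd : l ≫ pullback.snd π (g ≫ ρ.i) = f := pullback.lift_snd _ _ _
  exact ⟨l, s, by simp [← cancel_mono f, hs, hsnd, reassoc_of% hfst]⟩

end IsExtension

end Extensions

section AddClosure

variable {C : Type u} [Category.{v} C] [Abelian C]

lemma mem_addClosure_of_sum_eq_id {S : Set C} {ι : Type*} [Fintype ι] {X : C} (g : ι → C)
    (hg : ∀ k, g k ∈ S) (a : ∀ k, X ⟶ g k) (b : ∀ k, g k ⟶ X) (h : ∑ k, a k ≫ b k = 𝟙 X) :
    X ∈ addClosure S := by
  let φ := (Fintype.equivFin ι).symm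
  refine ⟨Fintype.card ι, fun k ↦ g (φ k), fun k ↦ hg _, biproduct.lift fun k ↦ a (φ k),
    biproduct.desc fun k ↦ b (φ k), ?_⟩
  rw [biproduct.lift_desc, ← h]
  exact φ.sum_comp fun k ↦ a k ≫ b k

lemma exists_sum_eq_id_of_mem_addClosure {S : Set C} {X : C} (h : X ∈ addClosure S) :
    ∃ (n : ℕ) (g : Fin n → C) (_ : ∀ k, g k ∈ S) (a : ∀ k, X ⟶ g k) (b : ∀ k, g k ⟶ X),
      ∑ k, a k ≫ b k = 𝟙 X := by
  obtain ⟨n, g, hg, s, p, hsp⟩ := h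
  refine ⟨n, g, hg, fun k ↦ s ≫ biproduct.π g k, fun k ↦ biproduct.ι g k ≫ p, ?_⟩
  calc ∑ k, (s ≫ biproduct.π g k) ≫ biproduct.ι g k ≫ p
      = s ≫ (∑ k, biproduct.π g k ≫ biproduct.ι g k) ≫ p := by
        simp only [Preadditive.sum_comp, Preadditive.comp_sum, Category.assoc]
    _ = 𝟙 X := by rw [biproduct.total, Category.id_comp, hsp]

lemma subset_addClosure (S : Set C) : S ⊆ addClosure S := fun X hX ↦
  mem_addClosure_of_sum_eq_id (fun _ : Unit ↦ X) (fun _ ↦ hX) (fun _ ↦ 𝟙 X) (fun _ ↦ 𝟙 X) (by simp)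

lemma addClosure_induction {S : Set C} {p : C → Prop} (mem : ∀ X ∈ S, p X)
    (zero : ∀ X, IsZero X → p X) (sum : ∀ X Y, p X → p Y → p (X ⊞ Y))
    (retract : ∀ X Y, Retract X Y → p Y → p X) {X : C} (hX : X ∈ addClosure S) : p X := by
  obtain ⟨n, g, hg, a, b, h⟩ := exists_sum_eq_id_of_mem_addClosure hX
  have partial_sum (s : Finset (Fin n)) : ∃ (Z : C) (α : X ⟶ Z) (β : Z ⟶ X), p Z ∧
      α ≫ β = ∑ k ∈ s, a k ≫ b k := by
    classical
    induction s using Finset.induction_on with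
    | empty => exact ⟨0, 0, 0, zero _ (isZero_zero C), by simp⟩
    | insert k s hk ih =>
      obtain ⟨Z, α, β, hZ, hαβ⟩ := ih
      exact ⟨g k ⊞ Z, biprod.lift (a k) α, biprod.desc (b k) β, sum _ _ (mem _ (hg k)) hZ, by
        rw [biprod.lift_desc, hαβ, Finset.sum_insert hk]⟩
  obtain ⟨Z, α, β, hZ, hαβ⟩ := partial_sum Finset.univ
  exact retract X Z ⟨α, β, hαβ.trans h⟩ hZ

lemma mem_addClosure_of_isZero {S : Set C} {X : C} (hX : IsZero X) : X ∈ addClosure S :=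
  mem_addClosure_of_sum_eq_id (ι := Empty) (fun k ↦ k.elim) (fun k ↦ k.elim) (fun k ↦ k.elim)
    (fun k ↦ k.elim) (hX.eq_of_src _ _)

lemma mem_addClosure_of_retract {S : Set C} {X Y : C} (ρ : Retract X Y) (hY : Y ∈ addClosure S) :
    X ∈ addClosure S := by
  obtain ⟨n, g, hg, s, p, hsp⟩ := hY
  exact ⟨n, g, hg, ρ.i ≫ s, p ≫ ρ.r, by simp [reassoc_of% hsp]⟩

lemma biprod_mem_addClosure {S : Set C} {X Y : C} (hX : X ∈ addClosure S)
    (hY : Y ∈ addClosure S) : (X ⊞ Y) ∈ addClosure S := by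
  obtain ⟨n, g, hg, a, b, h⟩ := exists_sum_eq_id_of_mem_addClosure hX
  obtain ⟨n', g', hg', a', b', h'⟩ := exists_sum_eq_id_of_mem_addClosure hY
  refine mem_addClosure_of_sum_eq_id (Sum.elim g g') (Sum.forall.2 ⟨hg, hg'⟩)
    (Sum.rec (fun k ↦ biprod.fst ≫ a k) fun k ↦ biprod.snd ≫ a' k)
    (Sum.rec (fun k ↦ b k ≫ biprod.inl) fun k ↦ b' k ≫ biprod.inr) ?_
  have hfst : ∑ k, ((biprod.fst : X ⊞ Y ⟶ X) ≫ a k) ≫ b k ≫ (biprod.inl : X ⟶ X ⊞ Y) =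
      biprod.fst ≫ (∑ k, a k ≫ b k) ≫ biprod.inl := by
    simp [Preadditive.sum_comp, Preadditive.comp_sum]
  have hsnd : ∑ k, ((biprod.snd : X ⊞ Y ⟶ Y) ≫ a' k) ≫ b' k ≫ (biprod.inr : Y ⟶ X ⊞ Y) =
      biprod.snd ≫ (∑ k, a' k ≫ b' k) ≫ biprod.inr := by
    simp [Preadditive.sum_comp, Preadditive.comp_sum]
  rw [Fintype.sum_sum_type]
  refine (congrArg₂ (· + ·) hfst hsnd).trans ?_
  rw [h, h', Category.id_comp, Category.id_comp, biprod.total]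

lemma left_mem_addClosure_biprod (X Y : C) : X ∈ addClosure {X ⊞ Y} :=
  mem_addClosure_of_retract ⟨biprod.inl, biprod.fst, by simp⟩ (subset_addClosure _ rfl)

lemma right_mem_addClosure_biprod (X Y : C) : Y ∈ addClosure {X ⊞ Y} :=
  mem_addClosure_of_retract ⟨biprod.inr, biprod.snd, by simp⟩ (subset_addClosure _ rfl)

lemma addClosure_subset {S S' : Set C} (h : S ⊆ addClosure S') : addClosure S ⊆ addClosure S' :=
  fun _ hX ↦ addClosure_induction (p := (· ∈ addClosure S')) h (fun _ ↦ mem_addClosure_of_isZero)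
    (fun _ _ ↦ biprod_mem_addClosure) (fun _ _ ↦ mem_addClosure_of_retract) hX

lemma addClosure_mono {S S' : Set C} (h : S ⊆ S') : addClosure S ⊆ addClosure S' :=
  addClosure_subset (h.trans (subset_addClosure S'))

lemma addClosure_addClosure (S : Set C) : addClosure (addClosure S) = addClosure S :=
  (addClosure_subset subset_rfl).antisymm (subset_addClosure _)

lemma isZero_of_retract {X Y : C} (ρ : Retract X Y) (hY : IsZero Y) : IsZero X := by
  rw [IsZero.iff_id_eq_zero, ← ρ.retract, hY.eq_of_tgt ρ.i 0, zero_comp]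

lemma addClosure_setOf_isZero : addClosure {X : C | IsZero X} = {X | IsZero X} :=
  Set.Subset.antisymm
    (fun _ ↦ addClosure_induction (p := IsZero) (fun _ ↦ id) (fun _ ↦ id)
      (fun _ _ hX hY ↦ (biprod_isZero_iff _ _).2 ⟨hX, hY⟩) fun _ _ ↦ isZero_of_retract)
    (subset_addClosure _)

lemma map_mem_addClosure {D : Type u'} [Category.{v'} D] [Abelian D] (F : C ⥤ D) [F.Additive]
    {S : Set C} {S' : Set D} (h : ∀ X ∈ S, F.obj X ∈ S') {X : C} (hX : X ∈ addClosure S) :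
    F.obj X ∈ addClosure S' := by
  obtain ⟨n, g, hg, a, b, hab⟩ := exists_sum_eq_id_of_mem_addClosure hX
  refine mem_addClosure_of_sum_eq_id (fun k ↦ F.obj (g k)) (fun k ↦ h _ (hg k))
    (fun k ↦ F.map (a k)) (fun k ↦ F.map (b k)) ?_
  simp only [← F.map_comp, ← F.map_sum, hab, F.map_id]

end AddClosure

section Bracket

variable {C : Type u} [Category.{v} C] [Abelian C]

/-- The objects which are extensions of an object of `T` by an object of `S`, so that `bulletOp S T`
is the additive closure of `extensions S T`. -/
def extensions (S T : Set C) : Set C :=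
  {X | ∃ U ∈ S, ∃ V ∈ T, IsExtension U X V}

lemma bulletOp_eq_addClosure_extensions (S T : Set C) :
    bulletOp S T = addClosure (extensions S T) := by
  simp only [bulletOp, extensions, IsExtension, exists_prop, exists_and_left]

lemma extensions_subset_bulletOp (S T : Set C) : extensions S T ⊆ bulletOp S T := by
  rw [bulletOp_eq_addClosure_extensions]
  exact subset_addClosure _

lemma bulletOp_mono {S S' T T' : Set C} (hS : S ⊆ S') (hT : T ⊆ T') :
    bulletOp S T ⊆ bulletOp S' T' := by
  simp only [bulletOp_eq_addClosure_extensions]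
  exact addClosure_mono fun X ⟨U, hU, V, hV, h⟩ ↦ ⟨U, hS hU, V, hT hV, h⟩

lemma exists_retract_of_mem_bulletOp {S T : Set C} {X : C}
    (hX : X ∈ bulletOp (addClosure S) (addClosure T)) :
    ∃ Y ∈ extensions (addClosure S) (addClosure T), Nonempty (Retract X Y) := by
  rw [bulletOp_eq_addClosure_extensions] at hX
  refine addClosure_induction
    (p := fun X ↦ ∃ Y ∈ extensions (addClosure S) (addClosure T), Nonempty (Retract X Y))
    (fun X hX ↦ ?mem) (fun X hX ↦ ?zero) (fun X X' ih ih' ↦ ?sum) (fun X X' τ ih ↦ ?retract) hX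
  case mem => exact ⟨X, hX, ⟨.refl X⟩⟩
  case zero =>
    exact ⟨X, ⟨X, mem_addClosure_of_isZero hX, X, mem_addClosure_of_isZero hX,
      .of_isZero_left hX⟩, ⟨.refl X⟩⟩
  case sum =>
    obtain ⟨Y, ⟨U, hU, V, hV, h⟩, ⟨ρ⟩⟩ := ih
    obtain ⟨Y', ⟨U', hU', V', hV', h'⟩, ⟨ρ'⟩⟩ := ih'
    exact ⟨Y ⊞ Y', ⟨U ⊞ U', biprod_mem_addClosure hU hU', V ⊞ V', biprod_mem_addClosure hV hV',
      h.biprod h'⟩, ⟨⟨biprod.map ρ.i ρ'.i, biprod.map ρ.r ρ'.r, by ext <;> simp⟩⟩⟩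
  case retract =>
    obtain ⟨Y, hY, ⟨ρ⟩⟩ := ih
    exact ⟨Y, hY, ⟨τ.trans ρ⟩⟩

lemma bulletOp_bulletOp_subset (S T R : Set C) :
    bulletOp (bulletOp (addClosure S) (addClosure T)) R ⊆
      bulletOp (addClosure S) (bulletOp (addClosure T) R) := by
  rw [bulletOp_eq_addClosure_extensions _ R, bulletOp_eq_addClosure_extensions _ (bulletOp _ R)]
  refine addClosure_subset ?_
  rintro X ⟨U, hU, V, hV, h⟩
  obtain ⟨U', ⟨U₁, hU₁, U₂, hU₂, hU'⟩, ⟨ρ⟩⟩ := exists_retract_of_mem_bulletOp hU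
  obtain ⟨X', hX', ⟨σ⟩⟩ := h.exists_of_retract_left ρ
  obtain ⟨E, hUX'E, hUEV⟩ := hU'.exists_cokernel_comp hX'
  exact mem_addClosure_of_retract σ (subset_addClosure _
    ⟨U₁, hU₁, E, extensions_subset_bulletOp _ _ ⟨U₂, hU₂, V, hV, hUEV⟩, hUX'E⟩)

lemma bracket_succ (T : C) (n : ℕ) :
    bracket T (n + 1) = addClosure (extensions (addClosure {T}) (bracket T n)) :=
  bulletOp_eq_addClosure_extensions _ _

lemma addClosure_bracket (T : C) (n : ℕ) : addClosure (bracket T n) = bracket T n := by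
  cases n with
  | zero => exact addClosure_setOf_isZero
  | succ n => rw [bracket_succ, addClosure_addClosure]

lemma mem_bracket_of_retract {T : C} {n : ℕ} {X Y : C} (ρ : Retract X Y)
    (hY : Y ∈ bracket T n) : X ∈ bracket T n := by
  rw [← addClosure_bracket] at hY ⊢
  exact mem_addClosure_of_retract ρ hY

lemma bracket_mono {T T' : C} (hT : T ∈ addClosure {T'}) (n : ℕ) :
    bracket T n ⊆ bracket T' n := by
  induction n with
  | zero => exact subset_rfl
  | succ n ih => exact bulletOp_mono (addClosure_subset (by simpa using hT)) ih

lemma bulletOp_bracket_subset (T : C) (a b : ℕ) :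
    bulletOp (bracket T a) (bracket T b) ⊆ bracket T (a + b) := by
  induction a with
  | zero =>
    rw [bulletOp_eq_addClosure_extensions, Nat.zero_add, ← addClosure_bracket T b]
    refine addClosure_subset ?_
    rintro X ⟨U, hU, V, hV, h⟩
    obtain ⟨φ⟩ := h.nonempty_iso_of_isZero_left hU
    exact mem_addClosure_of_retract φ.retract hV
  | succ a ih =>
    rw [Nat.succ_add]
    calc bulletOp (bulletOp (addClosure {T}) (bracket T a)) (bracket T b)
        ⊆ bulletOp (addClosure {T}) (bulletOp (bracket T a) (bracket T b)) := by
          simpa only [addClosure_bracket] using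
            bulletOp_bulletOp_subset {T} (bracket T a) (bracket T b)
      _ ⊆ bulletOp (addClosure {T}) (bracket T (a + b)) := bulletOp_mono subset_rfl ih

lemma map_mem_bracket {D : Type u'} [Category.{v'} D] [Abelian D] (F : C ⥤ D) [F.Additive]
    [PreservesFiniteLimits F] [PreservesFiniteColimits F] {T : C} {n : ℕ} {X : C}
    (h : X ∈ bracket T n) : F.obj X ∈ bracket (F.obj T) n := by
  induction n generalizing X with
  | zero => exact F.map_isZero h
  | succ n ih =>
    rw [bracket_succ] at h ⊢
    refine map_mem_addClosure F ?_ h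
    rintro Y ⟨U, hU, V, hV, hY⟩
    exact ⟨F.obj U, map_mem_addClosure F (by simp) hU, F.obj V, ih hV, hY.map F⟩

end Bracket

section Syzygies

variable {C : Type u} [Category.{v} C] [Abelian C]

/-- `X` has a syzygy in `S` up to retracts: `X` is a retract of an object admitting a presentation
by a projective object with kernel in `S`. Allowing a retract here makes the notion stable under
retracts without enlarging `S` by projective summands. -/
def HasSyzygyIn (S : Set C) (X : C) : Prop :=
  ∃ Z K P, Projective P ∧ K ∈ S ∧ IsExtension K P Z ∧ Nonempty (Retract X Z)

namespace HasSyzygyIn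

lemma of_mem_addClosure {S S' : Set C} (h : ∀ X ∈ S, HasSyzygyIn S' X) {X : C}
    (hX : X ∈ addClosure S) : HasSyzygyIn (addClosure S') X := by
  refine addClosure_induction (p := HasSyzygyIn (addClosure S'))
    (fun X hX ↦ ?mem) (fun X hX ↦ ?zero) (fun X X' ih ih' ↦ ?sum) (fun X X' τ ih ↦ ?retract) hX
  case mem =>
    obtain ⟨Z, K, P, hP, hK, hZ, hXZ⟩ := h X hX
    exact ⟨Z, K, P, hP, subset_addClosure _ hK, hZ, hXZ⟩
  case zero =>
    exact ⟨X, X, X, hX.projective, mem_addClosure_of_isZero hX, .of_isZero_left hX, ⟨.refl X⟩⟩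
  case sum =>
    obtain ⟨Z, K, P, _, hK, hZ, ⟨ρ⟩⟩ := ih
    obtain ⟨Z', K', P', _, hK', hZ', ⟨ρ'⟩⟩ := ih'
    exact ⟨Z ⊞ Z', K ⊞ K', P ⊞ P', inferInstance, biprod_mem_addClosure hK hK', hZ.biprod hZ',
      ⟨⟨biprod.map ρ.i ρ'.i, biprod.map ρ.r ρ'.r, by ext <;> simp⟩⟩⟩
  case retract =>
    obtain ⟨Z, K, P, hP, hK, hZ, ⟨ρ⟩⟩ := ih
    exact ⟨Z, K, P, hP, hK, hZ, ⟨τ.trans ρ⟩⟩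

lemma of_isExtension {S S' : Set C} {U X V : C} (hU : HasSyzygyIn S U) (hV : HasSyzygyIn S' V)
    (h : IsExtension U X V) : HasSyzygyIn (extensions S S') X := by
  obtain ⟨U', K, P, _, hK, hU', ⟨ρ⟩⟩ := hU
  obtain ⟨V', L, Q, _, hL, hV', ⟨σ⟩⟩ := hV
  obtain ⟨X', hX', hXX'⟩ := h.exists_of_retract ρ σ
  obtain ⟨M, R, hR, hM, hRX'⟩ := hX'.horseshoe hU' hV'
  exact ⟨X', M, R, hR, ⟨K, hK, L, hL, hM⟩, hRX', hXX'⟩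

lemma of_mem_bracket {T P Ω : C} [Projective P] (hT : IsExtension Ω P T) {n : ℕ} {X : C}
    (hX : X ∈ bracket T n) : HasSyzygyIn (bracket Ω n) X := by
  induction n generalizing X with
  | zero =>
    exact ⟨X, X, X, IsZero.projective hX, hX, .of_isZero_left hX, ⟨.refl X⟩⟩
  | succ n ih =>
    rw [bracket_succ] at hX ⊢
    refine of_mem_addClosure ?_ hX
    rintro Y ⟨U, hU, V, hV, hY⟩
    have hU' : HasSyzygyIn (addClosure {Ω}) U :=
      of_mem_addClosure (by rintro _ rfl; exact ⟨_, Ω, P, ‹_›, rfl, hT, ⟨.refl _⟩⟩) hU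
    exact hU'.of_isExtension (ih hV) hY

end HasSyzygyIn

lemma exists_kernel_mem_bracket [EnoughProjectives C] (S T : C) :
    ∃ W : C, ∀ ⦃a b : ℕ⦄ ⦃A R Q : C⦄, IsExtension A R Q → R ∈ bracket S a → Q ∈ bracket T b →
      A ∈ bracket W (b + a) := by
  let Ω := kernel (Projective.π T)
  refine ⟨Ω ⊞ S, fun a b A R Q h hR hQ ↦ ?_⟩
  obtain ⟨Z, K, P, _, hK, hZ, ⟨ρ⟩⟩ := HasSyzygyIn.of_mem_bracket (.of_epi (Projective.π T)) hQ
  obtain ⟨E, hE, ⟨σ⟩⟩ := h.exists_retract_of_projective ρ hZ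
  exact mem_bracket_of_retract σ (bulletOp_bracket_subset _ b a (extensions_subset_bulletOp _ _
    ⟨K, bracket_mono (left_mem_addClosure_biprod Ω S) b hK,
      R, bracket_mono (right_mem_addClosure_biprod Ω S) a hR, hE⟩))

lemma exists_mem_bracket_of_fpow [EnoughProjectives C] {R : C → C} {G : C ⥤ C}
    (h : ∀ A, IsExtension A (R A) (G.obj A)) {S : C} {k : ℕ} (hR : ∀ A, R A ∈ bracket S k)
    (n : ℕ) (T : C) (b : ℕ) :
    ∃ W : C, ∀ A, (fpow G n).obj A ∈ bracket T b → A ∈ bracket W (b + n * k) := by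
  induction n generalizing T b with
  | zero => exact ⟨T, fun A hA ↦ by simpa [fpow] using hA⟩
  | succ n ih =>
    obtain ⟨W', hW'⟩ := exists_kernel_mem_bracket S T
    obtain ⟨W, hW⟩ := ih W' (b + k)
    refine ⟨W, fun A hA ↦ ?_⟩
    rw [show b + (n + 1) * k = b + k + n * k by ring]
    exact hW A (hW' (h _) (hR _) hA)

end Syzygies

section ExtDim

variable {C : Type u} [Category.{v} C] [Abelian C]

lemma extDim_le_of_forall_mem_bracket {T : C} {m : ℕ} (h : ∀ X : C, X ∈ bracket T (m + 1)) :
    extDim C ≤ m :=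
  sInf_le ⟨m, rfl, T, h⟩

lemma exists_forall_mem_bracket_of_extDim_eq {m : ℕ} (h : extDim C = m) :
    ∃ T : C, ∀ X : C, X ∈ bracket T (m + 1) := by
  have hne : {x : ℕ∞ | ∃ m : ℕ, x = m ∧ ∃ T : C, ∀ X : C, X ∈ bracket T (m + 1)}.Nonempty := by
    by_contra! hempty
    rw [extDim, hempty, sInf_empty] at h
    exact ENat.top_ne_natCast m h
  obtain ⟨k, hk, hT⟩ := csInf_mem hne
  obtain rfl : m = k := by exact_mod_cast h.symm.trans hk
  exact hT

lemma extDim_le_of_forall_retract {D : Type u'} [Category.{v'} D] [Abelian D] (F : C ⥤ D)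
    [F.Additive] [PreservesFiniteLimits F] [PreservesFiniteColimits F]
    (h : ∀ Y : D, ∃ X : C, Nonempty (Retract Y (F.obj X))) : extDim D ≤ extDim C := by
  refine le_sInf ?_
  rintro _ ⟨m, rfl, T, hT⟩
  refine extDim_le_of_forall_mem_bracket (T := F.obj T) fun Y ↦ ?_
  obtain ⟨X, ⟨ρ⟩⟩ := h Y
  exact mem_bracket_of_retract ρ (map_mem_bracket F (hT X))

lemma extDim_le_of_isZero_fpow [EnoughProjectives C] {R : C → C} {G : C ⥤ C}
    (h : ∀ A, IsExtension A (R A) (G.obj A)) {S : C} {k : ℕ} (hR : ∀ A, R A ∈ bracket S (k + 1))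
    {n : ℕ} (hn : 0 < n) (hG : ∀ A, IsZero ((fpow G n).obj A)) :
    extDim C ≤ (n : ℕ∞) * (k + 1) - 1 := by
  obtain ⟨W, hW⟩ := exists_mem_bracket_of_fpow h hR n 0 0
  obtain ⟨l, hl⟩ : ∃ l, n * (k + 1) = l + 1 :=
    Nat.exists_eq_add_one.2 (Nat.mul_pos hn k.succ_pos)
  have hle : extDim C ≤ (n * (k + 1) - 1 : ℕ) := by
    rw [hl, Nat.add_sub_cancel]
    refine extDim_le_of_forall_mem_bracket (T := W) fun A ↦ ?_
    simpa [hl] using hW A (hG A)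
  exact_mod_cast hle

end ExtDim

section CleftCoextension

variable {𝒜 : Type u} [Category.{v} 𝒜] [Abelian 𝒜] {ℬ : Type u'} [Category.{v'} ℬ]

/-- A retraction of the monomorphism of a short exact sequence identifies the quotient with the
kernel of the retraction. -/
def isoKernelOfRetraction {S : ShortComplex 𝒜} (h : S.ShortExact) (ρ : S.X₂ ⟶ S.X₁)
    (hρ : S.f ≫ ρ = 𝟙 S.X₁) : S.X₃ ≅ kernel ρ :=
  IsLimit.conePointUniqueUpToIso
    (reverseSplitting (.ofExactOfRetraction S h.exact ρ hρ h.epi_g)).fIsKernel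
    (limit.isLimit _)

lemma shortExact_unit {e : 𝒜 ⥤ ℬ} {r : ℬ ⥤ 𝒜} [e.Faithful] (adj : e ⊣ r) {X Y : 𝒜}
    {q : r.obj (e.obj X) ⟶ Y} {hq : adj.unit.app X ≫ q = 0}
    (hcoker : IsColimit (CokernelCofork.ofπ q hq)) : (ShortComplex.mk _ q hq).ShortExact :=
  .mk' (ShortComplex.exact_of_g_is_cokernel _ hcoker)
    (inferInstanceAs (Mono (adj.unit.app X))) (Cofork.IsColimit.epi hcoker)

variable [Abelian ℬ] {e : 𝒜 ⥤ ℬ} {r : ℬ ⥤ 𝒜} [e.Faithful] [e.Additive] [PreservesFiniteLimits e]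
  [PreservesFiniteColimits e] (adj : e ⊣ r)

/-- The image under the left adjoint of the cokernel of the unit at `X` is the kernel of the counit
at `e.obj X`, since the counit splits the image of the unit. -/
def mapCokernelUnitIso {X Y : 𝒜} {q : r.obj (e.obj X) ⟶ Y} {hq : adj.unit.app X ≫ q = 0}
    (hcoker : IsColimit (CokernelCofork.ofπ q hq)) :
    e.obj Y ≅ kernel (adj.counit.app (e.obj X)) :=
  isoKernelOfRetraction ((shortExact_unit adj hcoker).map_of_exact e) _
    (adj.left_triangle_components X)

/-- The endofunctor `F'` computes the kernel of the counit. -/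
def objIsoKernelCounit {i : ℬ ⥤ 𝒜} (η : i ⋙ e ≅ 𝟭 ℬ) {G' : 𝒜 ⥤ 𝒜} {p : e ⋙ r ⟶ G'}
    {hp : ∀ X : 𝒜, adj.unit.app X ≫ p.app X = 0}
    (hcoker : ∀ X : 𝒜, IsColimit (CokernelCofork.ofπ (p.app X) (hp X)))
    {F' : ℬ ⥤ ℬ} (hF' : F' ≅ i ⋙ G' ⋙ e) (B : ℬ) : F'.obj B ≅ kernel (adj.counit.app B) :=
  hF'.app B ≪≫ mapCokernelUnitIso adj (hcoker (i.obj B)) ≪≫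
    kernel.mapIso _ _ ((r ⋙ e).mapIso (η.app B)) (η.app B) (adj.counit.naturality _).symm

end CleftCoextension

lemma nonempty_map_fpow_obj_iso {C : Type u} [Category.{v} C] {D : Type u'} [Category.{v'} D]
    {e : C ⥤ D} {G : C ⥤ C} {F : D ⥤ D} (h : ∀ X, Nonempty (e.obj (G.obj X) ≅ F.obj (e.obj X)))
    (n : ℕ) (X : C) : Nonempty (e.obj ((fpow G n).obj X) ≅ (fpow F n).obj (e.obj X)) := by
  induction n with
  | zero => exact ⟨.refl _⟩
  | succ n ih => exact ⟨(h _).some ≪≫ F.mapIso ih.some⟩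

/-- Let `(ℬ, 𝒜, i, e, r)` be a cleft coextension of abelian categories with
enough projectives such that `r` is exact and the induced endofunctor `F'` satisfies
`F'ⁿ = 0` for a positive integer `n`.  Then `dim ℬ ≤ dim 𝒜 ≤ n(dim ℬ + 1) − 1`. -/
theorem extDim_cleftCoextension
    {𝒜 : Type u} [Category.{v} 𝒜] [Abelian 𝒜] [EnoughProjectives 𝒜]
    {ℬ : Type u'} [Category.{v'} ℬ] [Abelian ℬ] [EnoughProjectives ℬ]
    (i : ℬ ⥤ 𝒜) (e : 𝒜 ⥤ ℬ) (r : ℬ ⥤ 𝒜)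
    [i.Additive] [e.Additive] [r.Additive]
    [e.Faithful] [PreservesFiniteLimits e] [PreservesFiniteColimits e]
    [PreservesFiniteLimits r] [PreservesFiniteColimits r]
    (adj : e ⊣ r) (η : i ⋙ e ≅ 𝟭 ℬ)
    (G' : 𝒜 ⥤ 𝒜) (p : (e ⋙ r : 𝒜 ⥤ 𝒜) ⟶ G')
    (hp : ∀ X : 𝒜, adj.unit.app X ≫ p.app X = 0)
    (hcoker : ∀ X : 𝒜, IsColimit (CokernelCofork.ofπ (p.app X) (hp X)))
    (F' : ℬ ⥤ ℬ) (hF' : F' ≅ i ⋙ G' ⋙ e)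
    (n : ℕ) (hn : 0 < n) (hFn : ∀ B : ℬ, IsZero ((fpow F' n).obj B)) :
    extDim ℬ ≤ extDim 𝒜 ∧ extDim 𝒜 ≤ (n : ℕ∞) * (extDim ℬ + 1) - 1 := by
  refine ⟨extDim_le_of_forall_retract e fun B ↦ ⟨i.obj B, ⟨(η.app B).symm.retract⟩⟩, ?_⟩
  by_cases htop : extDim ℬ = ⊤
  · simp [htop, ENat.mul_top, hn.ne']
  obtain ⟨m, hm⟩ := ENat.ne_top_iff_exists.1 htop
  obtain ⟨T, hT⟩ := exists_forall_mem_bracket_of_extDim_eq hm.symm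
  have hGF (A : 𝒜) : Nonempty (e.obj (G'.obj A) ≅ F'.obj (e.obj A)) :=
    ⟨mapCokernelUnitIso adj (hcoker A) ≪≫ (objIsoKernelCounit adj η hcoker hF' (e.obj A)).symm⟩
  have hG (A : 𝒜) : IsZero ((fpow G' n).obj A) := by
    obtain ⟨φ⟩ := nonempty_map_fpow_obj_iso hGF n A
    exact (IsZero.iff_id_eq_zero _).2 (e.map_injective (((hFn (e.obj A)).of_iso φ).eq_of_src _ _))
  rw [← hm]
  exact extDim_le_of_isZero_fpow (R := fun A ↦ r.obj (e.obj A))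
    (fun A ↦ .of_shortExact (shortExact_unit adj (hcoker A)))
    (fun A ↦ map_mem_bracket r (hT (e.obj A))) hn hG
end
end
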